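/- Let $d \geq 3$ and let $(\delta_0,\ldots,\delta_d)$ be a sequence of nonnegative integers with $\delta_0 = 1$, $\delta_1 \geq \delta_d$, and $\sum_{i=0}^d \delta_i \leq 3$. Then there exists an integral polytope $\mathcal{P} \subset \mathbb{R}^d$ of dimension $d$ with $\delta(\mathcal{P}) = (\delta_0,\ldots,\delta_d)$ if and only if, with $s = \max\{i : \delta_i \neq 0\}$, the inequalities $\delta_0+\cdots+\delta_i \leq \delta_s+\delta_{s-1}+\cdots+\delta_{s-i}$ for $0 \leq i \leq \lfloor s/2 \rfloor$ and $\delta_{d-1}+\cdots+\delta_{d-i} \leq \delta_2+\cdots+\delta_{i+1}$ for $1 \leq i \leq \lfloor (d-1)/2 \rfloor$ all hold. -/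

import Mathlib

open Set Pointwise

/-- The number of lattice points in the `n`-th dilation of `P ⊆ ℝ^N`. -/
noncomputable def ehr {N : ℕ} (P : Set (Fin N → ℝ)) (n : ℕ) : ℕ :=
  Set.ncard {x : Fin N → ℤ | (fun i => (x i : ℝ)) ∈ (n : ℝ) • P}

/-- The `i`-th coefficient of `(1-λ)^(d+1) * (1 + ∑_{n ≥ 1} i(P,n) λ^n)`,
i.e. the `i`-th entry of the δ-vector of a `d`-dimensional integral polytope. -/
noncomputable def deltaVec {N : ℕ} (P : Set (Fin N → ℝ)) (d i : ℕ) : ℤ :=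
  ∑ j ∈ Finset.range (i + 1),
    (-1 : ℤ) ^ (i - j) * (Nat.choose (d + 1) (i - j) : ℤ) * (ehr P j : ℤ)

/-- `P ⊆ ℝ^N` is an integral polytope of dimension `d`. -/
def IsIntegralPolytope {N : ℕ} (P : Set (Fin N → ℝ)) (d : ℕ) : Prop :=
  ∃ V : Finset (Fin N → ℤ), V.Nonempty ∧
    P = convexHull ℝ ((fun v i => ((v i : ℝ))) '' (V : Set (Fin N → ℤ))) ∧
    Module.finrank ℝ (vectorSpan ℝ P) = d

/-!
Let `Λ` be the group of weights on the `d + 1` vertices of a lattice simplex that have integer sum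
and represent a lattice point. Every lattice point of a dilation is uniquely a point of the unit box
of `Λ` plus a nonnegative integer combination of the vertices, so `δ i` counts the elements of the
finite group `Λ / ℤ ^ (d + 1)` of degree `i`. If this group has order at most three, comparing the
degrees of `g`, `-g` and `2 g` leaves only the degree multisets `{0}`, `{0, k}` and `{0, a, b}` with
`2 k ≤ d + 1`, respectively `a ≤ b ≤ 2 a` and `a + b ≤ d + 1`; these are exactly the solutions of
the inequalities. Conversely, a simplex whose weight group is generated by one vector with
denominators two or three realizes each of them.

A polytope with `δ 1 = 0` is a simplex. The only other polytope that could violate the conditions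
has `δ 1 = 1`, `δ 2 = 0` and volume three. It has `d + 2` lattice points, and its second dilation
has too few of them for all their pairwise sums to be distinct. A coincidence `a + b = c + e` makes
it the union of two simplices that share a facet and are exchanged by the unimodular flip
`a ↦ c + e - a`, so its volume is even, a contradiction.
-/

section IntegerLattice

variable {ι : Type*}

/-- The inclusion of `ℤ ^ ι` into `ℝ ^ ι`. -/
def castVec : (ι → ℤ) →+ (ι → ℝ) := (Int.castAddHom ℝ).compLeft ι

@[simp]
theorem castVec_apply (z : ι → ℤ) (i : ι) : castVec z i = z i := rfl

theorem castVec_injective : Function.Injective (castVec : (ι → ℤ) →+ (ι → ℝ)) :=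
  fun _ _ h => funext fun i => Int.cast_injective (congrFun h i)

/-- The lattice `ℤ ^ ι` as a subgroup of `ℝ ^ ι`. -/
def integerLattice (ι : Type*) : AddSubgroup (ι → ℝ) := castVec.range

theorem mem_integerLattice {x : ι → ℝ} : x ∈ integerLattice ι ↔ ∀ i, ∃ z : ℤ, x i = z := by
  constructor
  · rintro ⟨z, rfl⟩ i
    exact ⟨z i, rfl⟩
  · intro h
    choose z hz using h
    exact ⟨z, funext fun i => (hz i).symm⟩

/-- The fundamental domain of `ℝ / ℤ` that is `(0, 1]` if `p` holds and `[0, 1)` otherwise. -/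
def halfOpenUnit (p : Prop) : Set ℝ :=
  {a | (p → a ∈ Ioc 0 1) ∧ (¬p → a ∈ Ico 0 1)}

theorem halfOpenUnit_of_true {p : Prop} (hp : p) : halfOpenUnit p = Ioc 0 1 :=
  Set.ext fun a => by simp [halfOpenUnit, hp]

theorem halfOpenUnit_of_false {p : Prop} (hp : ¬p) : halfOpenUnit p = Ico 0 1 :=
  Set.ext fun a => by simp [halfOpenUnit, hp]

theorem halfOpenUnit_subset_Icc (p : Prop) : halfOpenUnit p ⊆ Icc 0 1 := by
  by_cases hp : p
  · exact halfOpenUnit_of_true hp ▸ Ioc_subset_Icc_self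
  · exact halfOpenUnit_of_false hp ▸ Ico_subset_Icc_self

theorem existsUnique_sub_intCast_mem_halfOpenUnit (p : Prop) (a : ℝ) :
    ∃! z : ℤ, a - z ∈ halfOpenUnit p := by
  by_cases hp : p
  · simpa [halfOpenUnit_of_true hp] using existsUnique_sub_zsmul_mem_Ioc one_pos a 0
  · simpa [halfOpenUnit_of_false hp] using existsUnique_sub_zsmul_mem_Ico one_pos a 0

/-- The elements of `Λ` in the half-open unit cube whose sides are `(0, 1]` in the coordinates
in `F` and `[0, 1)` in the others. -/
def halfOpenBox (Λ : AddSubgroup (ι → ℝ)) (F : Set ι) : Set (ι → ℝ) :=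
  {x | x ∈ Λ ∧ ∀ i, x i ∈ halfOpenUnit (i ∈ F)}

variable {Λ : AddSubgroup (ι → ℝ)} {F : Set ι} {x y : ι → ℝ}

theorem nonneg_of_mem_halfOpenBox (hx : x ∈ halfOpenBox Λ F) : 0 ≤ x :=
  fun i => (halfOpenUnit_subset_Icc _ (hx.2 i)).1

theorem le_one_of_mem_halfOpenBox (hx : x ∈ halfOpenBox Λ F) : x ≤ 1 :=
  fun i => (halfOpenUnit_subset_Icc _ (hx.2 i)).2

theorem lt_one_of_mem_halfOpenBox (hx : x ∈ halfOpenBox Λ F) {i : ι} (hi : i ∉ F) : x i < 1 :=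
  ((hx.2 i).2 hi).2

theorem zero_mem_halfOpenBox (Λ : AddSubgroup (ι → ℝ)) : 0 ∈ halfOpenBox Λ ∅ :=
  ⟨Λ.zero_mem, fun _ => ⟨fun h => h.elim, fun _ => ⟨le_rfl, one_pos⟩⟩⟩

theorem eq_of_sub_mem_integerLattice (hx : x ∈ halfOpenBox Λ F) (hy : y ∈ halfOpenBox Λ F)
    (h : x - y ∈ integerLattice ι) : x = y := by
  funext i
  obtain ⟨z, hz⟩ := mem_integerLattice.1 h i
  have hxy : x i - z = y i := by rw [← hz, Pi.sub_apply, sub_sub_cancel]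
  have : z = 0 := (existsUnique_sub_intCast_mem_halfOpenUnit (i ∈ F) (x i)).unique
    (hxy ▸ hy.2 i) (by simpa using hx.2 i)
  simpa [this] using hxy

theorem exists_castVec_sub_mem_halfOpenBox (hΛ : integerLattice ι ≤ Λ) (F : Set ι) (hx : x ∈ Λ) :
    ∃ z : ι → ℤ, x - castVec z ∈ halfOpenBox Λ F := by
  choose z hz using fun i => (existsUnique_sub_intCast_mem_halfOpenUnit (i ∈ F) (x i)).exists
  exact ⟨z, Λ.sub_mem hx (hΛ ⟨z, rfl⟩), hz⟩

theorem ncard_halfOpenBox (hΛ : integerLattice ι ≤ Λ) (F : Set ι) :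
    (halfOpenBox Λ F).ncard = (integerLattice ι).relIndex Λ := by
  let toQuotient (x : halfOpenBox Λ F) : Λ ⧸ (integerLattice ι).addSubgroupOf Λ :=
    QuotientAddGroup.mk ⟨x, x.2.1⟩
  refine Nat.card_eq_of_bijective toQuotient ⟨fun x y h => ?_, fun q => ?_⟩
  · refine Subtype.ext (eq_of_sub_mem_integerLattice y.2 x.2 ?_).symm
    simpa [AddSubgroup.mem_addSubgroupOf, neg_add_eq_sub] using QuotientAddGroup.eq.1 h
  · obtain ⟨⟨x, hx⟩, rfl⟩ := QuotientAddGroup.mk_surjective q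
    obtain ⟨z, hz⟩ := exists_castVec_sub_mem_halfOpenBox hΛ F hx
    refine ⟨⟨x - castVec z, hz⟩, QuotientAddGroup.eq.2 ?_⟩
    have hcast : castVec z ∈ integerLattice ι := ⟨z, rfl⟩
    simpa [AddSubgroup.mem_addSubgroupOf] using hcast

end IntegerLattice

section ConeLattice

variable {ι : Type*} [Fintype ι]

/-- The elements of `Λ` of coordinate sum `n` in the orthant of nonnegative vectors from which the
facets `x i = 0` with `i ∈ F` have been removed. -/
def coneSlice (Λ : AddSubgroup (ι → ℝ)) (F : Set ι) (n : ℕ) : Set (ι → ℝ) :=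
  {x | x ∈ Λ ∧ 0 ≤ x ∧ (∀ i ∈ F, 0 < x i) ∧ ∑ i, x i = n}

/-- The conditions on a group `Λ` between `ℤ ^ ι` and `ℝ ^ ι` under which its elements in the
orthant, graded by their coordinate sum, have a generating function. -/
structure IsConeLattice (Λ : AddSubgroup (ι → ℝ)) : Prop where
  integerLattice_le : integerLattice ι ≤ Λ
  exists_sum_eq_intCast : ∀ x ∈ Λ, ∃ z : ℤ, ∑ i, x i = z
  finite_coneSlice_empty : ∀ n, (coneSlice Λ ∅ n).Finite

/-- The coordinate sum of a nonnegative vector whose coordinate sum is an integer; for other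
vectors this is a junk value. -/
noncomputable def coordDegree (x : ι → ℝ) : ℕ := ⌊∑ i, x i⌋₊

variable {Λ : AddSubgroup (ι → ℝ)} {F : Set ι} {x : ι → ℝ} {n : ℕ}

theorem coordDegree_eq_of_sum_eq (h : ∑ i, x i = n) : coordDegree x = n := by
  rw [coordDegree, h, Nat.floor_natCast]

@[simp]
theorem coordDegree_zero : coordDegree (0 : ι → ℝ) = 0 := by
  simp [coordDegree]

namespace IsConeLattice

variable (hΛ : IsConeLattice Λ)
include hΛ

theorem cast_coordDegree (hx : x ∈ Λ) (h0 : 0 ≤ x) : (coordDegree x : ℝ) = ∑ i, x i := by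
  obtain ⟨z, hz⟩ := hΛ.exists_sum_eq_intCast x hx
  have hz0 : (0 : ℝ) ≤ z := hz ▸ Finset.sum_nonneg fun i _ => h0 i
  lift z to ℕ using mod_cast hz0
  rw [coordDegree_eq_of_sum_eq hz, hz, Int.cast_natCast]

theorem cast_coordDegree_of_mem_halfOpenBox (hx : x ∈ halfOpenBox Λ F) :
    (coordDegree x : ℝ) = ∑ i, x i :=
  hΛ.cast_coordDegree hx.1 (nonneg_of_mem_halfOpenBox hx)

theorem finite_coneSlice (F : Set ι) (n : ℕ) : (coneSlice Λ F n).Finite :=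
  (hΛ.finite_coneSlice_empty n).subset fun _ hx => ⟨hx.1, hx.2.1, fun _ h => h.elim, hx.2.2.2⟩

theorem coordDegree_le_card (hx : x ∈ halfOpenBox Λ F) : coordDegree x ≤ Fintype.card ι := by
  have h : ∑ i, x i ≤ ∑ _i : ι, (1 : ℝ) :=
    Finset.sum_le_sum fun i _ => le_one_of_mem_halfOpenBox hx i
  rw [← hΛ.cast_coordDegree_of_mem_halfOpenBox hx] at h
  exact_mod_cast (by simpa using h : (coordDegree x : ℝ) ≤ Fintype.card ι)

theorem coordDegree_lt_card (hF : F ≠ univ) (hx : x ∈ halfOpenBox Λ F) :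
    coordDegree x < Fintype.card ι := by
  obtain ⟨i, hi⟩ := (Set.ne_univ_iff_exists_notMem F).1 hF
  have h : ∑ i, x i < ∑ _i : ι, (1 : ℝ) :=
    Finset.sum_lt_sum (fun j _ => le_one_of_mem_halfOpenBox hx j)
      ⟨i, Finset.mem_univ i, lt_one_of_mem_halfOpenBox hx hi⟩
  rw [← hΛ.cast_coordDegree_of_mem_halfOpenBox hx] at h
  exact_mod_cast (by simpa using h : (coordDegree x : ℝ) < Fintype.card ι)

theorem finite_halfOpenBox (F : Set ι) : (halfOpenBox Λ F).Finite :=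
  ((Set.finite_Iic (Fintype.card ι)).biUnion fun n _ => hΛ.finite_coneSlice ∅ n).subset
    fun _ hx => Set.mem_biUnion (hΛ.coordDegree_le_card hx) ⟨hx.1, nonneg_of_mem_halfOpenBox hx,
      fun _ h => h.elim, (hΛ.cast_coordDegree_of_mem_halfOpenBox hx).symm⟩

/-- The multiset of coordinate sums of the elements of the half-open box; it encodes the
numerator of the generating function of the cone slices. -/
noncomputable def boxDegrees (F : Set ι) : Multiset ℕ :=
  (hΛ.finite_halfOpenBox F).toFinset.val.map coordDegree

theorem mem_boxDegrees {k : ℕ} :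
    k ∈ hΛ.boxDegrees F ↔ ∃ x ∈ halfOpenBox Λ F, coordDegree x = k := by
  simp [boxDegrees]

theorem card_boxDegrees (F : Set ι) :
    (hΛ.boxDegrees F).card = (integerLattice ι).relIndex Λ := by
  rw [boxDegrees, Multiset.card_map, Finset.card_val,
    ← Set.ncard_eq_toFinset_card _ (hΛ.finite_halfOpenBox F),
    ncard_halfOpenBox hΛ.integerLattice_le]

theorem lt_card_of_mem_boxDegrees (hF : F ≠ univ) {k : ℕ} (hk : k ∈ hΛ.boxDegrees F) :
    k < Fintype.card ι := by
  obtain ⟨x, hx, rfl⟩ := hΛ.mem_boxDegrees.1 hk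
  exact hΛ.coordDegree_lt_card hF hx

theorem sum_range_count_boxDegrees (hF : F ≠ univ) :
    ∑ i ∈ Finset.range (Fintype.card ι), (hΛ.boxDegrees F).count i =
      (integerLattice ι).relIndex Λ := by
  rw [Multiset.sum_count_eq_card fun k hk =>
    Finset.mem_range.2 (hΛ.lt_card_of_mem_boxDegrees hF hk), hΛ.card_boxDegrees]

theorem boxDegrees_eq_map {S : Finset (ι → ℝ)} (hS : halfOpenBox Λ F = S) :
    hΛ.boxDegrees F = S.val.map coordDegree := by
  have : (hΛ.finite_halfOpenBox F).toFinset = S := Finset.coe_injective (by simpa using hS)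
  rw [boxDegrees, this]

theorem add_natCast_mem_coneSlice (hx : x ∈ halfOpenBox Λ F) (m : ι → ℕ) :
    (fun i => x i + m i) ∈ coneSlice Λ F (coordDegree x + ∑ i, m i) := by
  refine ⟨Λ.add_mem hx.1 (hΛ.integerLattice_le ⟨fun i => m i, rfl⟩), fun i => ?_,
    fun i hi => ?_, ?_⟩
  · exact add_nonneg (nonneg_of_mem_halfOpenBox hx i) (Nat.cast_nonneg _)
  · exact add_pos_of_pos_of_nonneg ((hx.2 i).1 hi).1 (Nat.cast_nonneg _)
  · rw [Finset.sum_add_distrib, Nat.cast_add, hΛ.cast_coordDegree_of_mem_halfOpenBox hx,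
      Nat.cast_sum]

theorem exists_add_natCast_eq (hx : x ∈ coneSlice Λ F n) :
    ∃ g ∈ halfOpenBox Λ F, ∃ m : ι → ℕ, (fun i => g i + m i) = x := by
  obtain ⟨hxΛ, hx0, hxF, -⟩ := hx
  obtain ⟨z, hz⟩ := exists_castVec_sub_mem_halfOpenBox hΛ.integerLattice_le F hxΛ
  have hz0 (i : ι) : 0 ≤ z i := by
    have hlt : (-1 : ℝ) < z i := by
      by_cases hi : i ∈ F
      · linarith [hxF i hi, ((hz.2 i).1 hi).2, Pi.sub_apply x (castVec z) i, castVec_apply z i]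
      · linarith [hx0 i, ((hz.2 i).2 hi).2, Pi.sub_apply x (castVec z) i, castVec_apply z i,
          Pi.zero_apply (M := fun _ : ι => ℝ) i]
    have : -1 < z i := mod_cast hlt
    lia
  lift z to ι → ℕ using hz0
  exact ⟨_, hz, z, funext fun i => by simp⟩

theorem ncard_coneSlice [DecidableEq ι] (F : Set ι) (n : ℕ) :
    (coneSlice Λ F n).ncard = ∑ p ∈ Finset.HasAntidiagonal.antidiagonal n,
      (hΛ.boxDegrees F).count p.1 * ((Finset.univ : Finset ι).finsuppAntidiag p.2).card := by
  let box := (hΛ.finite_halfOpenBox F).toFinset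
  have hcount (k : ℕ) : (hΛ.boxDegrees F).count k = (box.filter (k = coordDegree ·)).card :=
    Multiset.count_map ..
  rw [Set.ncard_eq_toFinset_card _ (hΛ.finite_coneSlice F n)]
  simp_rw [hcount, ← Finset.card_product]
  rw [← Finset.card_sigma]
  refine (Finset.card_bij (fun q _ i => q.2.1 i + (q.2.2 i : ℝ)) ?_ ?_ ?_).symm
  · rintro ⟨p, x, m⟩ h
    simp only [Finset.mem_sigma, Finset.HasAntidiagonal.mem_antidiagonal, Finset.mem_product,
      Finset.mem_filter, Set.Finite.mem_toFinset, Finset.mem_finsuppAntidiag, box] at h ⊢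
    obtain ⟨hp, ⟨hx, hpx⟩, hm, -⟩ := h
    rw [← hp, hpx, ← hm]
    exact hΛ.add_natCast_mem_coneSlice hx m
  · rintro ⟨p, x, m⟩ h ⟨p', x', m'⟩ h' hadd
    simp only [Finset.mem_sigma, Finset.mem_product, Finset.mem_filter,
      Set.Finite.mem_toFinset, Finset.mem_finsuppAntidiag, box] at h h'
    obtain ⟨-, ⟨hx, hpx⟩, hm, -⟩ := h
    obtain ⟨-, ⟨hx', hpx'⟩, hm', -⟩ := h'
    obtain rfl : x = x' := by
      refine eq_of_sub_mem_integerLattice hx hx' ⟨fun i => m' i - m i, funext fun i => ?_⟩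
      simpa [sub_eq_sub_iff_add_eq_add, add_comm] using (congrFun hadd i).symm
    obtain rfl : m = m' := Finsupp.ext fun i => by simpa using congrFun hadd i
    obtain rfl : p = p' := Prod.ext (hpx.trans hpx'.symm) (hm.symm.trans hm')
    rfl
  · intro x hx
    rw [Set.Finite.mem_toFinset] at hx
    obtain ⟨g, hg, m, rfl⟩ := hΛ.exists_add_natCast_eq hx
    refine ⟨⟨(coordDegree g, ∑ i, m i), g, Finsupp.equivFunOnFinite.symm m⟩, ?_, rfl⟩
    have hn : coordDegree g + ∑ i, m i = n :=
      Nat.cast_injective ((hΛ.add_natCast_mem_coneSlice hg m).2.2.2.symm.trans hx.2.2.2)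
    simp [box, hg, hn]

open PowerSeries in
theorem mk_ncard_coneSlice_mul_one_sub_X_pow (F : Set ι) :
    (PowerSeries.mk fun n => ((coneSlice Λ F n).ncard : ℤ)) * (1 - X) ^ Fintype.card ι =
      PowerSeries.mk fun n => ((hΛ.boxDegrees F).count n : ℤ) := by
  classical
  have hseries : (PowerSeries.mk fun n => ((coneSlice Λ F n).ncard : ℤ)) =
      PowerSeries.mk (fun n => ((hΛ.boxDegrees F).count n : ℤ)) *
        ∏ _i : ι, PowerSeries.mk 1 := by
    ext n
    simp only [coeff_mk, hΛ.ncard_coneSlice, coeff_mul, PowerSeries.coeff_prod]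
    simp
  rw [hseries, Finset.prod_const, Finset.card_univ, mul_assoc, ← mul_pow,
    mk_one_mul_one_sub_eq_one, one_pow, mul_one]

end IsConeLattice

end ConeLattice

section DeltaVector

open PowerSeries

theorem coeff_one_sub_X_pow (d k : ℕ) :
    coeff k ((1 - X : ℤ⟦X⟧) ^ d) = (-1) ^ k * (d.choose k : ℤ) := by
  have hrescale : (1 - X : ℤ⟦X⟧) = rescale (-1 : ℤ) (1 + X) := by
    simp [rescale_X, sub_eq_add_neg]
  have hpoly : (1 + X : ℤ⟦X⟧) ^ d = (((1 + Polynomial.X) ^ d : Polynomial ℤ) : ℤ⟦X⟧) := by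
    simp
  rw [hrescale, ← map_pow, coeff_rescale, hpoly, Polynomial.coeff_coe,
    Polynomial.coeff_one_add_X_pow]

theorem deltaVec_eq_coeff {N : ℕ} (P : Set (Fin N → ℝ)) (d i : ℕ) :
    deltaVec P d i = coeff i (PowerSeries.mk (fun n => (ehr P n : ℤ)) * (1 - X) ^ (d + 1)) := by
  rw [coeff_mul, Finset.Nat.sum_antidiagonal_eq_sum_range_succ_mk, deltaVec]
  refine Finset.sum_congr rfl fun j _ => ?_
  simp only [coeff_mk, coeff_one_sub_X_pow]
  ring

end DeltaVector

section SmallGroups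

variable {ι : Type*} {Λ : AddSubgroup (ι → ℝ)} {g h x : ι → ℝ}

theorem eq_zero_of_mem_integerLattice (hx : x ∈ halfOpenBox Λ ∅) (hmem : x ∈ integerLattice ι) :
    x = 0 :=
  eq_of_sub_mem_integerLattice hx (zero_mem_halfOpenBox Λ) (by rwa [sub_zero])

theorem exists_sub_mem_integerLattice (hΛ : integerLattice ι ≤ Λ) (F : Set ι) (hx : x ∈ Λ) :
    ∃ y ∈ halfOpenBox Λ F, x - y ∈ integerLattice ι := by
  obtain ⟨z, hz⟩ := exists_castVec_sub_mem_halfOpenBox hΛ F hx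
  exact ⟨_, hz, z, (sub_sub_cancel _ _).symm⟩

theorem add_self_mem_integerLattice (hΛ : integerLattice ι ≤ Λ)
    (hbox : halfOpenBox Λ ∅ = {0, g}) (hg0 : g ≠ 0) : g + g ∈ integerLattice ι := by
  have hg : g ∈ halfOpenBox Λ ∅ := by simp [hbox]
  obtain ⟨y, hy, hmem⟩ := exists_sub_mem_integerLattice hΛ ∅ (Λ.add_mem hg.1 hg.1)
  rw [hbox] at hy
  rcases hy with rfl | rfl
  · rwa [sub_zero] at hmem
  · rw [add_sub_cancel_right] at hmem
    exact absurd (eq_zero_of_mem_integerLattice hg hmem) hg0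

theorem add_mem_and_add_self_sub_mem_integerLattice (hΛ : integerLattice ι ≤ Λ)
    (hbox : halfOpenBox Λ ∅ = {0, g, h}) (hg0 : g ≠ 0) (hh0 : h ≠ 0) (hgh : g ≠ h) :
    g + h ∈ integerLattice ι ∧ g + g - h ∈ integerLattice ι := by
  have hg : g ∈ halfOpenBox Λ ∅ := by simp [hbox]
  have hh : h ∈ halfOpenBox Λ ∅ := by simp [hbox]
  have hadd : g + h ∈ integerLattice ι := by
    obtain ⟨y, hy, hmem⟩ := exists_sub_mem_integerLattice hΛ ∅ (Λ.add_mem hg.1 hh.1)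
    rw [hbox] at hy
    rcases hy with rfl | rfl | rfl
    · rwa [sub_zero] at hmem
    · rw [add_sub_cancel_left] at hmem
      exact absurd (eq_zero_of_mem_integerLattice hh hmem) hh0
    · rw [add_sub_cancel_right] at hmem
      exact absurd (eq_zero_of_mem_integerLattice hg hmem) hg0
  refine ⟨hadd, ?_⟩
  obtain ⟨y, hy, hmem⟩ := exists_sub_mem_integerLattice hΛ ∅ (Λ.add_mem hg.1 hg.1)
  rw [hbox] at hy
  rcases hy with rfl | rfl | rfl
  · have hsub : g - h ∈ integerLattice ι := by
      simpa [add_sub_add_left_eq_sub] using sub_mem hmem hadd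
    exact absurd (eq_of_sub_mem_integerLattice hg hh hsub) hgh
  · rw [add_sub_cancel_right] at hmem
    exact absurd (eq_zero_of_mem_integerLattice hg hmem) hg0
  · exact hmem

/-- The multisets of box degrees that occur for the quotients `Λ / ℤ ^ (d + 1)` of order at most
three: the degrees of `0`, of an element of order two, and of the two elements of order three. -/
def IsSmallDegreeMultiset (d : ℕ) (M : Multiset ℕ) : Prop :=
  M = {0} ∨ (∃ k, 1 ≤ k ∧ 2 * k ≤ d + 1 ∧ M = {0, k}) ∨
    ∃ a b, 1 ≤ a ∧ a ≤ b ∧ b ≤ 2 * a ∧ a + b ≤ d + 1 ∧ M = {0, a, b}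

namespace IsConeLattice

variable [Fintype ι] (hΛ : IsConeLattice Λ)
include hΛ

theorem one_le_coordDegree (hx : x ∈ halfOpenBox Λ ∅) (hx0 : x ≠ 0) : 1 ≤ coordDegree x := by
  refine Nat.one_le_iff_ne_zero.2 fun hdeg => hx0 (funext fun i => ?_)
  have hsum := hΛ.cast_coordDegree_of_mem_halfOpenBox hx
  rw [hdeg, Nat.cast_zero, eq_comm,
    Finset.sum_eq_zero_iff_of_nonneg fun i _ => nonneg_of_mem_halfOpenBox hx i] at hsum
  exact hsum i (Finset.mem_univ i)

theorem coordDegree_add_coordDegree_le (hg : g ∈ halfOpenBox Λ ∅) (hh : h ∈ halfOpenBox Λ ∅)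
    (hgh : g + h ∈ integerLattice ι) : coordDegree g + coordDegree h ≤ Fintype.card ι := by
  have hle (i : ι) : g i + h i ≤ 1 := by
    obtain ⟨z, hz⟩ := mem_integerLattice.1 hgh i
    rw [Pi.add_apply] at hz
    have hlt : (z : ℝ) < 2 := by
      linarith [lt_one_of_mem_halfOpenBox hg (notMem_empty i),
        lt_one_of_mem_halfOpenBox hh (notMem_empty i)]
    have : z < 2 := mod_cast hlt
    rw [hz]
    exact_mod_cast (by lia : z ≤ 1)
  have hsum : ∑ i, g i + ∑ i, h i ≤ Fintype.card ι := by
    rw [← Finset.sum_add_distrib]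
    exact (Finset.sum_le_sum fun i _ => hle i).trans_eq (by simp)
  rw [← hΛ.cast_coordDegree_of_mem_halfOpenBox hg,
    ← hΛ.cast_coordDegree_of_mem_halfOpenBox hh] at hsum
  exact_mod_cast hsum

theorem coordDegree_le_two_mul (hg : g ∈ halfOpenBox Λ ∅) (hh : h ∈ halfOpenBox Λ ∅)
    (hgh : g + g - h ∈ integerLattice ι) : coordDegree h ≤ 2 * coordDegree g := by
  have hle (i : ι) : h i ≤ 2 * g i := by
    obtain ⟨z, hz⟩ := mem_integerLattice.1 hgh i
    rw [Pi.sub_apply, Pi.add_apply] at hz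
    have hlt : (-1 : ℝ) < z := by
      linarith [nonneg_of_mem_halfOpenBox hg i, lt_one_of_mem_halfOpenBox hh (notMem_empty i),
        Pi.zero_apply (M := fun _ : ι => ℝ) i]
    have : -1 < z := mod_cast hlt
    have hz0 : (0 : ℝ) ≤ z := mod_cast (by lia : 0 ≤ z)
    linarith
  have hsum : ∑ i, h i ≤ 2 * ∑ i, g i := by
    rw [Finset.mul_sum]
    exact Finset.sum_le_sum fun i _ => hle i
  rw [← hΛ.cast_coordDegree_of_mem_halfOpenBox hg,
    ← hΛ.cast_coordDegree_of_mem_halfOpenBox hh] at hsum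
  exact_mod_cast hsum

variable {d : ℕ} (hd : Fintype.card ι = d + 1)
include hd

theorem isSmallDegreeMultiset_of_box_eq_pair (hbox : halfOpenBox Λ ∅ = {0, g}) (hg0 : g ≠ 0) :
    IsSmallDegreeMultiset d (hΛ.boxDegrees ∅) := by
  classical
  have hg : g ∈ halfOpenBox Λ ∅ := by simp [hbox]
  have hle := hΛ.coordDegree_add_coordDegree_le hg hg
    (add_self_mem_integerLattice hΛ.integerLattice_le hbox hg0)
  refine .inr (.inl ⟨coordDegree g, hΛ.one_le_coordDegree hg hg0, by lia, ?_⟩)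
  rw [hΛ.boxDegrees_eq_map (S := {0, g}) (by simpa using hbox),
    Finset.insert_val_of_notMem (by simpa using hg0.symm)]
  simp

theorem isSmallDegreeMultiset_of_box_eq_triple (hbox : halfOpenBox Λ ∅ = {0, g, h})
    (hg0 : g ≠ 0) (hh0 : h ≠ 0) (hgh : g ≠ h) :
    IsSmallDegreeMultiset d (hΛ.boxDegrees ∅) := by
  classical
  wlog hdeg : coordDegree g ≤ coordDegree h generalizing g h
  · exact this (by rw [hbox, Set.pair_comm]) hh0 hg0 hgh.symm (le_of_not_ge hdeg)
  have hg : g ∈ halfOpenBox Λ ∅ := by simp [hbox]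
  have hh : h ∈ halfOpenBox Λ ∅ := by simp [hbox]
  obtain ⟨hadd, hsub⟩ :=
    add_mem_and_add_self_sub_mem_integerLattice hΛ.integerLattice_le hbox hg0 hh0 hgh
  refine .inr (.inr ⟨coordDegree g, coordDegree h, hΛ.one_le_coordDegree hg hg0, hdeg,
    hΛ.coordDegree_le_two_mul hg hh hsub,
    hd ▸ hΛ.coordDegree_add_coordDegree_le hg hh hadd, ?_⟩)
  rw [hΛ.boxDegrees_eq_map (S := {0, g, h}) (by simpa using hbox),
    Finset.insert_val_of_notMem (by simp [hg0.symm, hh0.symm]),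
    Finset.insert_val_of_notMem (by simpa using hgh)]
  simp

theorem isSmallDegreeMultiset_boxDegrees (hcard : (hΛ.boxDegrees ∅).card ≤ 3) :
    IsSmallDegreeMultiset d (hΛ.boxDegrees ∅) := by
  have hzero := zero_mem_halfOpenBox Λ
  have hfin := hΛ.finite_halfOpenBox ∅
  rw [hΛ.card_boxDegrees, ← ncard_halfOpenBox hΛ.integerLattice_le ∅,
    ← Set.ncard_sdiff_singleton_add_one hzero hfin] at hcard
  have hinsert : halfOpenBox Λ ∅ = insert 0 (halfOpenBox Λ ∅ \ {0}) := by
    rw [Set.insert_sdiff_singleton, Set.insert_eq_of_mem hzero]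
  have hmem {g : ι → ℝ} (hg : g ∈ halfOpenBox Λ ∅ \ {0}) : g ≠ 0 := hg.2
  obtain h0 | h1 | h2 : (halfOpenBox Λ ∅ \ {0}).ncard = 0 ∨ (halfOpenBox Λ ∅ \ {0}).ncard = 1 ∨
      (halfOpenBox Λ ∅ \ {0}).ncard = 2 := by lia
  · rw [Set.ncard_eq_zero (hfin.subset sdiff_subset)] at h0
    rw [h0, insert_empty_eq] at hinsert
    exact .inl (by simp [hΛ.boxDegrees_eq_map (S := {0}) (by simpa using hinsert)])
  · obtain ⟨g, hg⟩ := Set.ncard_eq_one.1 h1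
    rw [hg] at hinsert hmem
    exact hΛ.isSmallDegreeMultiset_of_box_eq_pair hd hinsert (hmem (by simp))
  · obtain ⟨g, h, hgh, hg⟩ := Set.ncard_eq_two.1 h2
    rw [hg] at hinsert hmem
    exact hΛ.isSmallDegreeMultiset_of_box_eq_triple hd hinsert (hmem (by simp)) (hmem (by simp))
      hgh

end IsConeLattice

end SmallGroups

section Inequalities

variable {d k a b s : ℕ} {M : Multiset ℕ}

theorem sum_count_eq_countP {S : Finset ℕ} (M : Multiset ℕ) :
    ∑ k ∈ S, M.count k = M.countP (· ∈ S) := by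
  induction M using Multiset.induction_on with
  | empty => simp
  | cons a M ih => simp [Multiset.count_cons, Multiset.countP_cons, Finset.sum_add_distrib, ih]

theorem sum_range_count (M : Multiset ℕ) (i : ℕ) :
    ∑ j ∈ Finset.range i, M.count j = M.countP (· < i) := by
  simp [sum_count_eq_countP]

theorem sum_range_count_add (M : Multiset ℕ) (m i : ℕ) :
    ∑ j ∈ Finset.range i, M.count (m + j) = M.countP fun k => m ≤ k ∧ k < m + i := by
  rw [← Finset.sum_image (f := M.count) (g := (m + ·)) (by simp), sum_count_eq_countP]
  refine Multiset.countP_congr rfl fun k _ => ?_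
  simp only [Finset.mem_image, Finset.mem_range, eq_iff_iff]
  exact ⟨by lia, fun hk => ⟨k - m, by lia, by lia⟩⟩

theorem sum_range_count_sub (M : Multiset ℕ) {m i : ℕ} (hi : i ≤ m + 1) :
    ∑ j ∈ Finset.range i, M.count (m - j) = M.countP fun k => k ≤ m ∧ m < k + i := by
  have hinj : Set.InjOn (m - ·) (Finset.range i) := by
    intro j hj j' hj' h
    simp only [Finset.coe_range, Set.mem_Iio] at hj hj' h
    lia
  rw [← Finset.sum_image (f := M.count) hinj, sum_count_eq_countP]
  refine Multiset.countP_congr rfl fun k _ => ?_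
  simp only [Finset.mem_image, Finset.mem_range, eq_iff_iff]
  exact ⟨by lia, fun hk => ⟨m - k, by lia, by lia⟩⟩

/-- Stanley's inequalities for a `δ`-vector whose last nonzero entry is `δ s`. -/
def StanleyInequalities (s : ℕ) (δ : ℕ → ℕ) : Prop :=
  ∀ i ≤ s / 2, ∑ j ∈ Finset.range (i + 1), δ j ≤ ∑ j ∈ Finset.range (i + 1), δ (s - j)

/-- Hibi's inequalities for the `δ`-vector of a `d`-dimensional integral polytope. -/
def HibiInequalities (d : ℕ) (δ : ℕ → ℕ) : Prop :=
  ∀ i, 1 ≤ i → i ≤ (d - 1) / 2 →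
    ∑ j ∈ Finset.range i, δ (d - 1 - j) ≤ ∑ j ∈ Finset.range i, δ (2 + j)

theorem stanleyInequalities_count_iff :
    StanleyInequalities s M.count ↔ ∀ i ≤ s / 2,
      M.countP (· < i + 1) ≤ M.countP fun k => k ≤ s ∧ s < k + (i + 1) := by
  refine forall₂_congr fun i hi => ?_
  rw [sum_range_count, sum_range_count_sub M (by lia)]

theorem hibiInequalities_count_iff :
    HibiInequalities d M.count ↔ ∀ i, 1 ≤ i → i ≤ (d - 1) / 2 →
      (M.countP fun k => k ≤ d - 1 ∧ d - 1 < k + i) ≤ M.countP fun k => 2 ≤ k ∧ k < 2 + i := by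
  refine forall₃_congr fun i _ hi => ?_
  rw [sum_range_count_sub M (by lia), sum_range_count_add]

theorem stanleyInequalities_singleton : StanleyInequalities 0 (Multiset.count · {0}) := by
  intro i hi
  simp [Nat.le_zero.1 hi]

theorem hibiInequalities_singleton (d : ℕ) : HibiInequalities d (Multiset.count · {0}) := by
  rw [hibiInequalities_count_iff]
  intro i _ hi
  rw [Multiset.countP_eq_zero.2 fun k hk => by rw [Multiset.mem_singleton] at hk; lia]
  exact Nat.zero_le _

theorem stanleyInequalities_pair (hk : 1 ≤ k) :
    StanleyInequalities k (Multiset.count · {0, k}) := by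
  rw [stanleyInequalities_count_iff]
  intro i hi
  simp only [Multiset.insert_eq_cons, ← Multiset.cons_zero, Multiset.countP_cons,
    Multiset.countP_zero]
  split_ifs <;> lia

theorem hibiInequalities_pair_iff (hk : 1 ≤ k) (hkd : k ≤ d)
    (h1d : Multiset.count d {0, k} ≤ Multiset.count 1 {0, k}) :
    HibiInequalities d (Multiset.count · {0, k}) ↔ 2 * k ≤ d + 1 := by
  rw [hibiInequalities_count_iff]
  simp only [Multiset.insert_eq_cons, ← Multiset.cons_zero, Multiset.countP_cons,
    Multiset.countP_zero, Multiset.count_cons, Multiset.count_zero] at h1d ⊢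
  constructor
  · intro h
    by_contra hlt
    rcases hkd.eq_or_lt with rfl | hkd
    · split_ifs at h1d <;> lia
    · specialize h (d - k) (by lia) (by lia)
      split_ifs at h <;> lia
  · intro h i _ hi
    split_ifs <;> lia

theorem stanleyInequalities_triple_iff (ha : 1 ≤ a) (hab : a ≤ b) :
    StanleyInequalities b (Multiset.count · {0, a, b}) ↔ b ≤ 2 * a := by
  rw [stanleyInequalities_count_iff]
  simp only [Multiset.insert_eq_cons, ← Multiset.cons_zero, Multiset.countP_cons,
    Multiset.countP_zero]
  constructor
  · intro h
    by_contra hlt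
    specialize h a (by lia)
    split_ifs at h <;> lia
  · intro h i hi
    split_ifs <;> lia

theorem hibiInequalities_triple_iff (ha : 1 ≤ a) (hab : a ≤ b) (hba : b ≤ 2 * a) (hbd : b ≤ d)
    (h1d : Multiset.count d {0, a, b} ≤ Multiset.count 1 {0, a, b}) :
    HibiInequalities d (Multiset.count · {0, a, b}) ↔ a + b ≤ d + 1 := by
  rw [hibiInequalities_count_iff]
  simp only [Multiset.insert_eq_cons, ← Multiset.cons_zero, Multiset.countP_cons,
    Multiset.countP_zero, Multiset.count_cons, Multiset.count_zero] at h1d ⊢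
  constructor
  · intro h
    by_contra hlt
    rcases hbd.eq_or_lt with rfl | hbd
    · split_ifs at h1d <;> lia
    · specialize h (d - b) (by lia) (by lia)
      split_ifs at h <;> lia
  · intro h i _ hi
    split_ifs <;> lia

theorem eq_singleton_or_pair_or_triple (h0 : M.count 0 = 1) (hM : M.card ≤ 3) :
    M = {0} ∨ (∃ k, 1 ≤ k ∧ M = {0, k}) ∨ ∃ a b, 1 ≤ a ∧ a ≤ b ∧ M = {0, a, b} := by
  obtain ⟨R, rfl⟩ := Multiset.exists_cons_of_mem (Multiset.count_pos.1 (h0 ▸ one_pos))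
  have hR : 0 ∉ R := by simpa using h0
  have hpos {k : ℕ} (hk : k ∈ R) : 1 ≤ k := Nat.one_le_iff_ne_zero.2 (ne_of_mem_of_not_mem hk hR)
  rw [Multiset.card_cons] at hM
  obtain hc | hc | hc : R.card = 0 ∨ R.card = 1 ∨ R.card = 2 := by lia
  · exact .inl (by simp [Multiset.card_eq_zero.1 hc])
  · obtain ⟨k, rfl⟩ := Multiset.card_eq_one.1 hc
    exact .inr (.inl ⟨k, hpos (by simp), rfl⟩)
  · obtain ⟨a, b, rfl⟩ := Multiset.card_eq_two.1 hc
    rcases le_total a b with hab | hba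
    · exact .inr (.inr ⟨a, b, hpos (by simp), hab, rfl⟩)
    · exact .inr (.inr ⟨b, a, hpos (by simp), hba, by rw [Multiset.pair_comm]; rfl⟩)

theorem inequalities_count_iff (h0 : M.count 0 = 1) (hM : M.card ≤ 3) (hd : ∀ k ∈ M, k ≤ d)
    (h1d : M.count d ≤ M.count 1) (hs : s ∈ M) (hs_max : ∀ k ∈ M, k ≤ s) :
    StanleyInequalities s M.count ∧ HibiInequalities d M.count ↔ IsSmallDegreeMultiset d M := by
  constructor
  · rintro ⟨hstanley, hhibi⟩
    rcases eq_singleton_or_pair_or_triple h0 hM with rfl | ⟨k, hk, rfl⟩ | ⟨a, b, ha, hab, rfl⟩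
    · exact .inl rfl
    · exact .inr (.inl ⟨k, hk, (hibiInequalities_pair_iff hk (hd k (by simp)) h1d).1 hhibi, rfl⟩)
    · have hs_mem : s = 0 ∨ s = a ∨ s = b := by simpa using hs
      obtain rfl : s = b := le_antisymm (by lia) (hs_max b (by simp))
      have hba := (stanleyInequalities_triple_iff ha hab).1 hstanley
      exact .inr (.inr ⟨a, s, ha, hab, hba,
        (hibiInequalities_triple_iff ha hab hba (hd s (by simp)) h1d).1 hhibi, rfl⟩)
  · rintro (rfl | ⟨k, hk, hkd, rfl⟩ | ⟨a, b, ha, hab, hba, habd, rfl⟩)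
    · obtain rfl : s = 0 := by simpa using hs
      exact ⟨stanleyInequalities_singleton, hibiInequalities_singleton d⟩
    · have hs_mem : s = 0 ∨ s = k := by simpa using hs
      obtain rfl : s = k := le_antisymm (by lia) (hs_max k (by simp))
      exact ⟨stanleyInequalities_pair hk,
        (hibiInequalities_pair_iff hk (hd s (by simp)) h1d).2 hkd⟩
    · have hs_mem : s = 0 ∨ s = a ∨ s = b := by simpa using hs
      obtain rfl : s = b := le_antisymm (by lia) (hs_max b (by simp))
      exact ⟨(stanleyInequalities_triple_iff ha hab).2 hba,
        (hibiInequalities_triple_iff ha hab hba (hd s (by simp)) h1d).2 habd⟩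

end Inequalities

section LatticePolytope

variable {κ : Type*} {N : ℕ}

/-- The convex hull of a set of lattice points. -/
def latticeHull (S : Set (Fin N → ℤ)) : Set (Fin N → ℝ) := convexHull ℝ (castVec '' S)

variable [Fintype κ] {w : κ → Fin N → ℤ} {F : Set κ} {n : ℕ} {z : Fin N → ℤ}

/-- The linear map sending a family of weights to the weighted sum of the lattice points `w i`. -/
noncomputable def weightedSum (w : κ → Fin N → ℤ) : (κ → ℝ) →ₗ[ℝ] (Fin N → ℝ) :=
  Fintype.linearCombination ℝ fun i => castVec (w i)

theorem weightedSum_apply (w : κ → Fin N → ℤ) (t : κ → ℝ) :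
    weightedSum w t = ∑ i, t i • castVec (w i) :=
  Fintype.linearCombination_apply ..

@[simp]
theorem weightedSum_single [DecidableEq κ] (w : κ → Fin N → ℤ) (i : κ) (a : ℝ) :
    weightedSum w (Pi.single i a) = a • castVec (w i) := by
  simp [weightedSum_apply, Pi.single_apply]

theorem weightedSum_update [DecidableEq κ] (w : κ → Fin N → ℤ) (i : κ) (p : Fin N → ℤ)
    (t : κ → ℝ) :
    weightedSum (Function.update w i p) t = weightedSum w t + t i • castVec (p - w i) := by
  rw [← sub_eq_iff_eq_add', weightedSum_apply, weightedSum_apply, ← Finset.sum_sub_distrib,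
    Finset.sum_eq_single i]
  · simp [smul_sub]
  · intro j _ hj
    simp [hj]
  · simp

theorem weightedSum_option_elim (w : κ → Fin N → ℤ) (p : Fin N → ℤ) (t : Option κ → ℝ) :
    weightedSum (fun o : Option κ => o.elim p w) t =
      t none • castVec p + weightedSum w (t ∘ some) := by
  simp [weightedSum_apply, Fintype.sum_option]

theorem weightedSum_apply_apply (w : κ → Fin N → ℤ) (t : κ → ℝ) (j : Fin N) :
    weightedSum w t j = ∑ i, t i * w i j := by
  simp [weightedSum_apply, Finset.sum_apply]

/-- The lattice points of the `n`-th dilation of the convex hull of the points `w i` that can be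
represented with positive weights on the indices in `F`. -/
def latticePoints (w : κ → Fin N → ℤ) (F : Set κ) (n : ℕ) : Set (Fin N → ℤ) :=
  {z | ∃ t : κ → ℝ, 0 ≤ t ∧ (∀ i ∈ F, 0 < t i) ∧ ∑ i, t i = n ∧ weightedSum w t = castVec z}

theorem latticeHull_range (w : κ → Fin N → ℤ) :
    latticeHull (range w) = weightedSum w '' stdSimplex ℝ κ := by
  classical
  have hvertices : castVec ∘ w = weightedSum w ∘ fun i => Pi.single i 1 := by
    funext i
    simp
  rw [← convexHull_rangle_single_eq_stdSimplex, LinearMap.image_convexHull, ← range_comp,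
    ← hvertices, range_comp, latticeHull]

theorem castVec_mem_smul_latticeHull_range [Nonempty κ] :
    castVec z ∈ (n : ℝ) • latticeHull (range w) ↔ z ∈ latticePoints w ∅ n := by
  rw [latticeHull_range, Set.mem_smul_set]
  constructor
  · rintro ⟨_, ⟨t, ⟨ht0, ht1⟩, rfl⟩, hz⟩
    refine ⟨(n : ℝ) • t, smul_nonneg n.cast_nonneg ht0, by simp, ?_, by rw [map_smul, hz]⟩
    simp [← Finset.mul_sum, ht1]
  · rintro ⟨t, ht0, -, htn, hz⟩
    rcases n.eq_zero_or_pos with rfl | hn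
    · classical
      have ht : t = 0 := by
        funext i
        exact (Finset.sum_eq_zero_iff_of_nonneg fun i _ => ht0 i).1 (by simpa using htn) i
          (Finset.mem_univ i)
      let i₀ := Classical.arbitrary κ
      exact ⟨_, ⟨Pi.single i₀ 1, single_mem_stdSimplex ℝ i₀, rfl⟩, by simpa [ht] using hz⟩
    · have hn0 : (n : ℝ) ≠ 0 := by positivity
      refine ⟨_, ⟨(n : ℝ)⁻¹ • t, ⟨fun i => ?_, ?_⟩, rfl⟩, by simpa [smul_smul, hn0] using hz⟩
      · exact mul_nonneg (by positivity) (ht0 i)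
      · simp [← Finset.mul_sum, htn, hn0]

theorem ehr_latticeHull_range [Nonempty κ] (w : κ → Fin N → ℤ) (n : ℕ) :
    ehr (latticeHull (range w)) n = (latticePoints w ∅ n).ncard :=
  congrArg Set.ncard (Set.ext fun _ => castVec_mem_smul_latticeHull_range)

theorem finite_latticePoints (w : κ → Fin N → ℤ) (F : Set κ) (n : ℕ) :
    (latticePoints w F n).Finite := by
  let bound (j : Fin N) : ℤ := n * ∑ i, |w i j|
  refine (Set.finite_Icc (-bound) bound).subset ?_
  rintro z ⟨t, ht0, -, htn, hz⟩
  have habs (j : Fin N) : |z j| ≤ bound j := by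
    have hle : |(z j : ℝ)| ≤ ∑ i, (n : ℝ) * |(w i j : ℝ)| := by
      rw [← castVec_apply, ← hz, weightedSum_apply_apply]
      refine (Finset.abs_sum_le_sum_abs _ _).trans (Finset.sum_le_sum fun i _ => ?_)
      rw [abs_mul, abs_of_nonneg (ht0 i), ← htn]
      exact mul_le_mul_of_nonneg_right
        (Finset.single_le_sum (fun i _ => ht0 i) (Finset.mem_univ i)) (abs_nonneg _)
    rw [← Finset.mul_sum] at hle
    exact_mod_cast hle
  exact ⟨fun j => (abs_le.1 (habs j)).1, fun j => (abs_le.1 (habs j)).2⟩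

/-- The group of weights with integer sum whose weighted sum of the points `w i` is a lattice
point. -/
noncomputable def weightLattice (w : κ → Fin N → ℤ) : AddSubgroup (κ → ℝ) :=
  (integerLattice (Fin N)).comap (weightedSum w).toAddMonoidHom ⊓
    (Int.castAddHom ℝ).range.comap (∑ i, Pi.evalAddMonoidHom (fun _ : κ => ℝ) i)

theorem mem_weightLattice {t : κ → ℝ} :
    t ∈ weightLattice w ↔ weightedSum w t ∈ integerLattice (Fin N) ∧ ∃ m : ℤ, ∑ i, t i = m :=
  and_congr Iff.rfl ⟨fun ⟨m, hm⟩ => ⟨m, by simpa using hm.symm⟩, fun ⟨m, hm⟩ => ⟨m, by simp [hm]⟩⟩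

theorem integerLattice_le_weightLattice (w : κ → Fin N → ℤ) :
    integerLattice κ ≤ weightLattice w := by
  rintro _ ⟨z, rfl⟩
  refine mem_weightLattice.2 ⟨⟨∑ i, z i • w i, ?_⟩, ∑ i, z i, by simp⟩
  simp only [weightedSum_apply, map_sum, map_zsmul, castVec_apply, Int.cast_smul_eq_zsmul]

theorem affineIndependent_castVec_iff :
    AffineIndependent ℝ (fun i => castVec (w i)) ↔
      ∀ t : κ → ℝ, ∑ i, t i = 0 → weightedSum w t = 0 → t = 0 := by
  rw [affineIndependent_iff_of_fintype]
  refine forall₂_congr fun t ht => ?_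
  rw [Finset.univ.weightedVSub_eq_linear_combination ht, ← weightedSum_apply, funext_iff (f := t)]
  rfl

theorem eq_of_weightedSum_eq (hw : AffineIndependent ℝ fun i => castVec (w i)) {t u : κ → ℝ}
    (hsum : ∑ i, t i = ∑ i, u i) (h : weightedSum w t = weightedSum w u) : t = u :=
  sub_eq_zero.1 (affineIndependent_castVec_iff.1 hw (t - u) (by simp [hsum]) (by simp [h]))

theorem injOn_weightedSum (hw : AffineIndependent ℝ fun i => castVec (w i)) (F : Set κ) (n : ℕ) :
    InjOn (weightedSum w) (coneSlice (weightLattice w) F n) :=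
  fun _ ht _ hu h => eq_of_weightedSum_eq hw (ht.2.2.2.trans hu.2.2.2.symm) h

theorem image_weightedSum_coneSlice (w : κ → Fin N → ℤ) (F : Set κ) (n : ℕ) :
    weightedSum w '' coneSlice (weightLattice w) F n = castVec '' latticePoints w F n := by
  ext x
  constructor
  · rintro ⟨t, ⟨ht, ht0, htF, htn⟩, rfl⟩
    obtain ⟨z, hz⟩ := (mem_weightLattice.1 ht).1
    exact ⟨z, ⟨t, ht0, htF, htn, hz.symm⟩, hz⟩
  · rintro ⟨z, ⟨t, ht0, htF, htn, hz⟩, rfl⟩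
    exact ⟨t, ⟨mem_weightLattice.2 ⟨⟨z, hz.symm⟩, n, by simpa using htn⟩, ht0, htF, htn⟩, hz⟩

theorem ncard_latticePoints (hw : AffineIndependent ℝ fun i => castVec (w i)) (F : Set κ) (n : ℕ) :
    (latticePoints w F n).ncard = (coneSlice (weightLattice w) F n).ncard := by
  rw [← Set.ncard_image_of_injective _ castVec_injective, ← image_weightedSum_coneSlice,
    (injOn_weightedSum hw F n).ncard_image]

theorem isConeLattice_weightLattice (hw : AffineIndependent ℝ fun i => castVec (w i)) :
    IsConeLattice (weightLattice w) where
  integerLattice_le := integerLattice_le_weightLattice w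
  exists_sum_eq_intCast _ ht := (mem_weightLattice.1 ht).2
  finite_coneSlice_empty n := by
    refine Set.Finite.of_finite_image ?_ (injOn_weightedSum hw ∅ n)
    rw [image_weightedSum_coneSlice]
    exact (finite_latticePoints w ∅ n).image _

open PowerSeries in
theorem mk_ncard_latticePoints_mul_one_sub_X_pow
    (hw : AffineIndependent ℝ fun i => castVec (w i)) (F : Set κ) :
    (PowerSeries.mk fun n => ((latticePoints w F n).ncard : ℤ)) * (1 - X) ^ Fintype.card κ =
      PowerSeries.mk fun n => (((isConeLattice_weightLattice hw).boxDegrees F).count n : ℤ) := by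
  simp_rw [ncard_latticePoints hw]
  exact (isConeLattice_weightLattice hw).mk_ncard_coneSlice_mul_one_sub_X_pow F

theorem deltaVec_latticeHull_range [Nonempty κ] (hw : AffineIndependent ℝ fun i => castVec (w i))
    {d : ℕ} (hd : Fintype.card κ = d + 1) (i : ℕ) :
    deltaVec (latticeHull (range w)) d i =
      ((isConeLattice_weightLattice hw).boxDegrees ∅).count i := by
  simp_rw [deltaVec_eq_coeff, ehr_latticeHull_range, ← hd]
  rw [mk_ncard_latticePoints_mul_one_sub_X_pow hw, PowerSeries.coeff_mk]

end LatticePolytope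

section Flip

variable {κ : Type*} [DecidableEq κ] {i₀ i₁ i₂ : κ} {N : ℕ} {w : κ → Fin N → ℤ}

/-- The coefficient vector of the relation `2 w i₀ - w i₁ - w i₂` measuring how far `w i₀` is from
the midpoint of `w i₁` and `w i₂`. -/
def flipRoot (i₀ i₁ i₂ : κ) : κ → ℤ := Pi.single i₀ 2 - Pi.single i₁ 1 - Pi.single i₂ 1

/-- The change of weights when the point `w i₀` is replaced by `w i₁ + w i₂ - w i₀`. -/
def flipWeights (i₀ i₁ i₂ : κ) : (κ → ℝ) →ₗ[ℝ] (κ → ℝ) :=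
  Module.preReflection (castVec (flipRoot i₀ i₁ i₂)) (LinearMap.proj i₀)

theorem flipWeights_eq (t : κ → ℝ) :
    flipWeights i₀ i₁ i₂ t = t - t i₀ • castVec (flipRoot i₀ i₁ i₂) :=
  Module.preReflection_apply ..

theorem flipRoot_self (h₁ : i₁ ≠ i₀) (h₂ : i₂ ≠ i₀) : flipRoot i₀ i₁ i₂ i₀ = 2 := by
  simp [flipRoot, h₁.symm, h₂.symm]

theorem flipRoot_nonpos {i : κ} (hi : i ≠ i₀) : flipRoot i₀ i₁ i₂ i ≤ 0 := by
  simp only [flipRoot, Pi.sub_apply, Pi.single_apply, hi, if_false]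
  split_ifs <;> lia

theorem le_flipWeights_apply {t : κ → ℝ} (ht : 0 ≤ t i₀) {i : κ} (hi : i ≠ i₀) :
    t i ≤ flipWeights i₀ i₁ i₂ t i := by
  have hroot : (flipRoot i₀ i₁ i₂ i : ℝ) ≤ 0 := by exact_mod_cast flipRoot_nonpos hi
  simpa [flipWeights_eq] using mul_nonpos_of_nonneg_of_nonpos ht hroot

theorem involutive_flipWeights (h₁ : i₁ ≠ i₀) (h₂ : i₂ ≠ i₀) :
    Function.Involutive (flipWeights i₀ i₁ i₂) :=
  Module.involutive_preReflection (by simp [flipRoot_self h₁ h₂])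

theorem flipWeights_self (h₁ : i₁ ≠ i₀) (h₂ : i₂ ≠ i₀) (t : κ → ℝ) :
    flipWeights i₀ i₁ i₂ t i₀ = -t i₀ := by
  simp only [flipWeights_eq, Pi.sub_apply, Pi.smul_apply, castVec_apply, flipRoot_self h₁ h₂,
    smul_eq_mul]
  push_cast
  ring

theorem flipWeights_mem_integerLattice {t : κ → ℝ} (ht : t ∈ integerLattice κ) :
    flipWeights i₀ i₁ i₂ t ∈ integerLattice κ := by
  obtain ⟨z, rfl⟩ := ht
  exact ⟨z - z i₀ • flipRoot i₀ i₁ i₂, by ext; simp [flipWeights_eq]⟩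

theorem comap_flipWeights_integerLattice (h₁ : i₁ ≠ i₀) (h₂ : i₂ ≠ i₀) :
    (integerLattice κ).comap (flipWeights i₀ i₁ i₂).toAddMonoidHom = integerLattice κ :=
  le_antisymm
    (fun t ht => involutive_flipWeights h₁ h₂ t ▸ flipWeights_mem_integerLattice ht)
    fun _ ht => flipWeights_mem_integerLattice ht

/-- The family `w` with the point `w i₀` replaced by `w i₁ + w i₂ - w i₀`. -/
def flipPoints (w : κ → Fin N → ℤ) (i₀ i₁ i₂ : κ) : κ → Fin N → ℤ :=
  Function.update w i₀ (w i₁ + w i₂ - w i₀)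

variable [Fintype κ]

theorem sum_flipWeights (t : κ → ℝ) : ∑ i, flipWeights i₀ i₁ i₂ t i = ∑ i, t i := by
  have hroot : ∑ i, (flipRoot i₀ i₁ i₂ i : ℝ) = 0 := by
    rw [← Int.cast_sum]
    simp [flipRoot]
  simp [flipWeights_eq, ← Finset.mul_sum, hroot]

theorem weightedSum_flipPoints (t : κ → ℝ) :
    weightedSum (flipPoints w i₀ i₁ i₂) t = weightedSum w (flipWeights i₀ i₁ i₂ t) := by
  have hroot : castVec (flipRoot i₀ i₁ i₂) =
      (Pi.single i₀ 2 - Pi.single i₁ 1 - Pi.single i₂ 1 : κ → ℝ) := by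
    ext i
    simp [flipRoot, Pi.single_apply]
  rw [flipPoints, weightedSum_update, flipWeights_eq, hroot]
  simp only [map_sub, map_add, map_smul, weightedSum_single]
  module

omit [Fintype κ] in
theorem affineIndependent_flipPoints [Finite κ] (h₁ : i₁ ≠ i₀) (h₂ : i₂ ≠ i₀)
    (hw : AffineIndependent ℝ fun i => castVec (w i)) :
    AffineIndependent ℝ fun i => castVec (flipPoints w i₀ i₁ i₂ i) := by
  have := Fintype.ofFinite κ
  rw [affineIndependent_castVec_iff] at hw ⊢
  intro t hsum ht
  rw [← sum_flipWeights (i₀ := i₀) (i₁ := i₁) (i₂ := i₂)] at hsum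
  rw [weightedSum_flipPoints] at ht
  exact (involutive_flipWeights h₁ h₂).injective ((hw _ hsum ht).trans (map_zero _).symm)

theorem weightLattice_flipPoints :
    weightLattice (flipPoints w i₀ i₁ i₂) =
      (weightLattice w).comap (flipWeights i₀ i₁ i₂).toAddMonoidHom :=
  AddSubgroup.ext fun t => by
    simp [mem_weightLattice, weightedSum_flipPoints, sum_flipWeights]

theorem relIndex_weightLattice_flipPoints (h₁ : i₁ ≠ i₀) (h₂ : i₂ ≠ i₀) :
    (integerLattice κ).relIndex (weightLattice (flipPoints w i₀ i₁ i₂)) =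
      (integerLattice κ).relIndex (weightLattice w) := by
  rw [weightLattice_flipPoints]
  nth_rw 1 [← comap_flipWeights_integerLattice h₁ h₂]
  rw [AddSubgroup.relIndex_comap, AddSubgroup.map_comap_eq_self_of_surjective
    (involutive_flipWeights h₁ h₂).surjective]

theorem disjoint_latticePoints_flipPoints (h₁ : i₁ ≠ i₀) (h₂ : i₂ ≠ i₀)
    (hw : AffineIndependent ℝ fun i => castVec (w i)) (n : ℕ) :
    Disjoint (latticePoints w ∅ n) (latticePoints (flipPoints w i₀ i₁ i₂) {i₀} n) := by
  rw [Set.disjoint_left]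
  rintro z ⟨t, ht0, -, htn, ht⟩ ⟨u, -, hu, hun, hz⟩
  rw [weightedSum_flipPoints] at hz
  have htu : t = flipWeights i₀ i₁ i₂ u :=
    eq_of_weightedSum_eq hw (by rw [sum_flipWeights, htn, hun]) (ht.trans hz.symm)
  have hneg := ht0 i₀
  rw [htu, flipWeights_self h₁ h₂] at hneg
  exact (hu i₀ rfl).not_ge (by simpa using hneg)

theorem weightedSum_option_elim_flip (w : κ → Fin N → ℤ) (t : Option κ → ℝ) :
    weightedSum (fun o : Option κ => o.elim (w i₁ + w i₂ - w i₀) w) t =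
      weightedSum w (flipWeights i₀ i₁ i₂ (Pi.single i₀ (t none)) + t ∘ some) := by
  rw [weightedSum_option_elim, map_add, ← weightedSum_flipPoints, weightedSum_single, flipPoints,
    Function.update_self]

theorem latticePoints_option_elim_subset (h₁ : i₁ ≠ i₀) (h₂ : i₂ ≠ i₀) (w : κ → Fin N → ℤ)
    (n : ℕ) :
    latticePoints (fun o : Option κ => o.elim (w i₁ + w i₂ - w i₀) w) ∅ n ⊆
      latticePoints w ∅ n ∪ latticePoints (flipPoints w i₀ i₁ i₂) {i₀} n := by
  rintro z ⟨t, ht0, -, htn, htz⟩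
  have hsum : t none + ∑ i, (t ∘ some) i = n := (Fintype.sum_option t).symm.trans htn
  rw [weightedSum_option_elim_flip] at htz
  set τ := t none
  set u := t ∘ some
  have hu0 (i : κ) : 0 ≤ u i := ht0 (some i)
  have hτ0 : (0 : κ → ℝ) ≤ Pi.single i₀ τ := Pi.single_nonneg.2 (ht0 none)
  rcases le_or_gt τ (u i₀) with hle | hlt
  · refine .inl ⟨_, fun i => ?_, by simp, ?_, htz⟩
    · rcases eq_or_ne i i₀ with rfl | hi
      · simpa [flipWeights_self h₁ h₂] using hle
      · exact add_nonneg ((hτ0 i).trans (le_flipWeights_apply (hτ0 i₀) hi)) (hu0 i)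
    · simpa only [Pi.add_apply, Finset.sum_add_distrib, sum_flipWeights,
        Fintype.sum_pi_single'] using hsum
  · refine .inr ⟨Pi.single i₀ τ + flipWeights i₀ i₁ i₂ u, fun i => ?_, ?_, ?_, ?_⟩
    · rcases eq_or_ne i i₀ with rfl | hi
      · simpa [flipWeights_self h₁ h₂] using hlt.le
      · exact add_nonneg (hτ0 i) ((hu0 i).trans (le_flipWeights_apply (hu0 i₀) hi))
    · rintro _ rfl
      simpa [flipWeights_self h₁ h₂] using hlt
    · simpa only [Pi.add_apply, Finset.sum_add_distrib, sum_flipWeights,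
        Fintype.sum_pi_single'] using hsum
    · rwa [weightedSum_flipPoints, map_add, involutive_flipWeights h₁ h₂ u]

theorem latticePoints_union_subset_option_elim (w : κ → Fin N → ℤ) (n : ℕ) :
    latticePoints w ∅ n ∪ latticePoints (flipPoints w i₀ i₁ i₂) {i₀} n ⊆
      latticePoints (fun o : Option κ => o.elim (w i₁ + w i₂ - w i₀) w) ∅ n := by
  rintro z (⟨t, ht0, -, htn, htz⟩ | ⟨t, ht0, -, htn, htz⟩)
  · refine ⟨fun o => o.elim 0 t, ?_, by simp, by simpa [Fintype.sum_option] using htn, ?_⟩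
    · rintro (_ | i)
      exacts [le_rfl, ht0 i]
    · rw [weightedSum_option_elim, Option.elim_none, zero_smul, zero_add, ← htz]
      rfl
  · have hupdate : Function.update t i₀ 0 = t - Pi.single i₀ (t i₀) := by
      ext i
      rcases eq_or_ne i i₀ with rfl | hi <;> simp [*]
    refine ⟨fun o => o.elim (t i₀) (Function.update t i₀ 0), ?_, by simp, ?_, ?_⟩
    · rintro (_ | i)
      · exact ht0 i₀
      · exact le_update_iff.2 ⟨le_rfl, fun j _ => ht0 j⟩ i
    · simp [Fintype.sum_option, hupdate, htn]
    · rw [flipPoints, weightedSum_update] at htz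
      rw [weightedSum_option_elim, ← htz]
      simp only [Option.elim_none, Function.comp_def, Option.elim_some, hupdate, map_sub, map_add,
        weightedSum_single]
      module

theorem latticePoints_option_elim (h₁ : i₁ ≠ i₀) (h₂ : i₂ ≠ i₀) (w : κ → Fin N → ℤ) (n : ℕ) :
    latticePoints (fun o : Option κ => o.elim (w i₁ + w i₂ - w i₀) w) ∅ n =
      latticePoints w ∅ n ∪ latticePoints (flipPoints w i₀ i₁ i₂) {i₀} n :=
  (latticePoints_option_elim_subset h₁ h₂ w n).antisymm (latticePoints_union_subset_option_elim w n)

theorem ehr_latticeHull_insert_flip (h₁ : i₁ ≠ i₀) (h₂ : i₂ ≠ i₀)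
    (hw : AffineIndependent ℝ fun i => castVec (w i)) (n : ℕ) :
    ehr (latticeHull (insert (w i₁ + w i₂ - w i₀) (range w))) n =
      (latticePoints w ∅ n).ncard + (latticePoints (flipPoints w i₀ i₁ i₂) {i₀} n).ncard := by
  have : Nonempty κ := ⟨i₀⟩
  rw [← Option.range_elim, ehr_latticeHull_range, latticePoints_option_elim h₁ h₂,
    Set.ncard_union_eq (disjoint_latticePoints_flipPoints h₁ h₂ hw n) (finite_latticePoints ..)
      (finite_latticePoints ..)]

theorem deltaVec_latticeHull_insert_flip (h₁ : i₁ ≠ i₀) (h₂ : i₂ ≠ i₀)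
    (hw : AffineIndependent ℝ fun i => castVec (w i)) {d : ℕ} (hd : Fintype.card κ = d + 1)
    (i : ℕ) :
    deltaVec (latticeHull (insert (w i₁ + w i₂ - w i₀) (range w))) d i =
      ((isConeLattice_weightLattice hw).boxDegrees ∅).count i +
        ((isConeLattice_weightLattice
          (affineIndependent_flipPoints h₁ h₂ hw)).boxDegrees {i₀}).count i := by
  have hadd : (PowerSeries.mk fun n =>
        (ehr (latticeHull (insert (w i₁ + w i₂ - w i₀) (range w))) n : ℤ)) =
      (PowerSeries.mk fun n => ((latticePoints w ∅ n).ncard : ℤ)) +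
        PowerSeries.mk fun n => ((latticePoints (flipPoints w i₀ i₁ i₂) {i₀} n).ncard : ℤ) := by
    ext n
    simp [ehr_latticeHull_insert_flip h₁ h₂ hw]
  rw [deltaVec_eq_coeff, hadd, add_mul, ← hd, mk_ncard_latticePoints_mul_one_sub_X_pow hw,
    mk_ncard_latticePoints_mul_one_sub_X_pow (affineIndependent_flipPoints h₁ h₂ hw), map_add,
    PowerSeries.coeff_mk, PowerSeries.coeff_mk]

omit [DecidableEq κ] in
/-- Both halves of the bipyramid over the common facet have the same normalized volume. -/
theorem even_sum_deltaVec_insert_flip (h₁ : i₁ ≠ i₀) (h₂ : i₂ ≠ i₀)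
    (hw : AffineIndependent ℝ fun i => castVec (w i)) {d : ℕ} (hd : Fintype.card κ = d + 1) :
    Even (∑ i ∈ Finset.range (d + 1),
      deltaVec (latticeHull (insert (w i₁ + w i₂ - w i₀) (range w))) d i) := by
  classical
  have hproper : ({i₀} : Set κ) ≠ univ := fun h => h₁ (h.symm ▸ mem_univ i₁ : i₁ ∈ ({i₀} : Set κ))
  have : Nonempty κ := ⟨i₀⟩
  refine ⟨(integerLattice κ).relIndex (weightLattice w), ?_⟩
  simp_rw [deltaVec_latticeHull_insert_flip h₁ h₂ hw hd, Finset.sum_add_distrib, ← Nat.cast_sum]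
  rw [← hd, IsConeLattice.sum_range_count_boxDegrees _ (Set.empty_ne_univ),
    IsConeLattice.sum_range_count_boxDegrees _ hproper, relIndex_weightLattice_flipPoints h₁ h₂]

end Flip

section Necessity

variable {N d : ℕ}

theorem ehr_zero {P : Set (Fin N → ℝ)} (hP : P.Nonempty) : ehr P 0 = 1 := by
  rw [ehr, Nat.cast_zero, Set.zero_smul_set hP, Set.ncard_eq_one]
  exact ⟨0, by ext; simp [funext_iff]⟩

theorem deltaVec_zero {P : Set (Fin N → ℝ)} (hP : P.Nonempty) : deltaVec P d 0 = 1 := by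
  simp [deltaVec, ehr_zero hP]

theorem deltaVec_one {P : Set (Fin N → ℝ)} (hP : P.Nonempty) :
    deltaVec P d 1 = ehr P 1 - (d + 1) := by
  simp only [deltaVec, Finset.sum_range_succ, Finset.sum_range_zero, ehr_zero hP]
  norm_num
  ring

theorem deltaVec_two {P : Set (Fin N → ℝ)} (hP : P.Nonempty) :
    deltaVec P d 2 = ehr P 2 - (d + 1) * ehr P 1 + (d + 1).choose 2 := by
  simp only [deltaVec, Finset.sum_range_succ, Finset.sum_range_zero, ehr_zero hP]
  norm_num
  ring

theorem ehr_two_lt_choose {P : Set (Fin N → ℝ)} (hP : P.Nonempty) (h1 : ehr P 1 = d + 2)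
    (h2 : deltaVec P d 2 = 0) : ehr P 2 < (d + 3).choose 2 := by
  rw [deltaVec_two hP, h1] at h2
  have h2' : (ehr P 2 : ℚ) - (d + 1) * (d + 2) + (d + 1).choose 2 = 0 := by exact_mod_cast h2
  rw [← Nat.cast_lt (α := ℚ), Nat.cast_choose_two]
  rw [Nat.cast_choose_two] at h2'
  push_cast at h2' ⊢
  linarith

theorem vectorSpan_latticeHull (S : Set (Fin N → ℤ)) :
    vectorSpan ℝ (latticeHull S) = vectorSpan ℝ (castVec '' S) := by
  rw [← direction_affineSpan, latticeHull, affineSpan_convexHull, direction_affineSpan]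

theorem vectorSpan_latticeHull_insert_flip {S : Set (Fin N → ℤ)} {a c e : Fin N → ℤ} (ha : a ∈ S)
    (hc : c ∈ S) (he : e ∈ S) :
    vectorSpan ℝ (latticeHull (insert (c + e - a) S)) = vectorSpan ℝ (latticeHull S) := by
  have hmem {x : Fin N → ℤ} (hx : x ∈ S) : castVec x ∈ affineSpan ℝ (castVec '' S) :=
    subset_affineSpan ℝ _ (mem_image_of_mem _ hx)
  have hflip : castVec (c + e - a) ∈ affineSpan ℝ (castVec '' S) := by
    convert AffineSubspace.smul_vsub_vadd_mem _ (1 : ℝ) (hmem hc) (hmem ha) (hmem he) using 1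
    simp only [map_sub, map_add, vsub_eq_sub, vadd_eq_add, one_smul]
    abel
  rw [vectorSpan_latticeHull, vectorSpan_latticeHull, image_insert_eq,
    vectorSpan_insert_eq_vectorSpan hflip]

theorem affineIndependent_castVec_of_finrank {κ : Type*} [Fintype κ] {w : κ → Fin N → ℤ}
    (hd : Fintype.card κ = d + 1)
    (hdim : Module.finrank ℝ (vectorSpan ℝ (latticeHull (range w))) = d) :
    AffineIndependent ℝ fun i => castVec (w i) := by
  rwa [affineIndependent_iff_finrank_vectorSpan_eq ℝ _ hd, Set.range_comp' castVec w,
    ← vectorSpan_latticeHull]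

theorem isSmallDegreeMultiset_of_card_eq {A : Finset (Fin N → ℤ)} {M : Multiset ℕ}
    (hA : A.card = d + 1)
    (hdim : Module.finrank ℝ (vectorSpan ℝ (latticeHull (A : Set (Fin N → ℤ)))) = d)
    (hMd : ∀ k ∈ M, k ≤ d) (hM : M.card ≤ 3)
    (hδ : ∀ i ≤ d, deltaVec (latticeHull (A : Set (Fin N → ℤ))) d i = M.count i) :
    IsSmallDegreeMultiset d M := by
  have hcard : Fintype.card A = d + 1 := by rw [Fintype.card_coe, hA]
  have : Nonempty A := Fintype.card_pos_iff.1 (by lia)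
  rw [← Subtype.range_coe (s := (A : Set (Fin N → ℤ)))] at hdim hδ
  have hw := affineIndependent_castVec_of_finrank hcard hdim
  have hbox : M = (isConeLattice_weightLattice hw).boxDegrees ∅ := by
    ext i
    rcases le_or_gt i d with hi | hi
    · exact_mod_cast (hδ i hi).symm.trans (deltaVec_latticeHull_range hw hcard i)
    · rw [Multiset.count_eq_zero.2 fun h => hi.not_ge (hMd i h), Multiset.count_eq_zero.2]
      intro h
      have := IsConeLattice.lt_card_of_mem_boxDegrees _ Set.empty_ne_univ h
      lia
  rw [hbox] at hM ⊢
  exact IsConeLattice.isSmallDegreeMultiset_boxDegrees _ hcard hM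

theorem even_sum_deltaVec_of_add_eq_add {A : Finset (Fin N → ℤ)} (hA : A.card = d + 2)
    (hdim : Module.finrank ℝ (vectorSpan ℝ (latticeHull (A : Set (Fin N → ℤ)))) = d)
    {a b c e : Fin N → ℤ} (ha : a ∈ A.erase b) (hb : b ∈ A) (hc : c ∈ A.erase b)
    (he : e ∈ A.erase b) (hca : c ≠ a) (hea : e ≠ a) (h : a + b = c + e) :
    Even (∑ i ∈ Finset.range (d + 1), deltaVec (latticeHull (A : Set (Fin N → ℤ))) d i) := by
  let w : A.erase b → Fin N → ℤ := Subtype.val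
  have hcard : Fintype.card (A.erase b) = d + 1 := by
    rw [Fintype.card_coe, Finset.card_erase_of_mem hb, hA, Nat.add_one_sub_one]
  have hrange : (A : Set (Fin N → ℤ)) = insert (w ⟨c, hc⟩ + w ⟨e, he⟩ - w ⟨a, ha⟩) (range w) := by
    rw [Subtype.range_coe, show w ⟨c, hc⟩ + w ⟨e, he⟩ - w ⟨a, ha⟩ = b from sub_eq_of_eq_add' h.symm]
    exact_mod_cast (Finset.insert_erase hb).symm
  rw [hrange, vectorSpan_latticeHull_insert_flip (mem_range_self _) (mem_range_self _)
    (mem_range_self _)] at hdim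
  rw [hrange]
  exact even_sum_deltaVec_insert_flip (by simpa using hca) (by simpa using hea)
    (affineIndependent_castVec_of_finrank hcard hdim) hcard

theorem castVec_mem_latticeHull {S : Set (Fin N → ℤ)} {z : Fin N → ℤ} (hz : z ∈ S) :
    castVec z ∈ latticeHull S :=
  subset_convexHull ℝ _ (mem_image_of_mem _ hz)

theorem finite_setOf_castVec_mem_smul_latticeHull {A : Finset (Fin N → ℤ)} (hA : A.Nonempty)
    (n : ℕ) : {z | castVec z ∈ (n : ℝ) • latticeHull (A : Set (Fin N → ℤ))}.Finite := by
  have := hA.to_subtype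
  refine (finite_latticePoints (Subtype.val : A → Fin N → ℤ) ∅ n).subset fun z hz => ?_
  rw [← castVec_mem_smul_latticeHull_range, Subtype.range_coe]
  exact hz

theorem castVec_add_mem_two_smul_latticeHull {S : Set (Fin N → ℤ)} {x y : Fin N → ℤ} (hx : x ∈ S)
    (hy : y ∈ S) : castVec (x + y) ∈ ((2 : ℕ) : ℝ) • latticeHull S := by
  refine ⟨midpoint ℝ (castVec x) (castVec y), (convex_convexHull ℝ _).midpoint_mem
    (castVec_mem_latticeHull hx) (castVec_mem_latticeHull hy), ?_⟩
  simp [midpoint_eq_smul_add]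

theorem exists_sym2_ne_add_eq_add {A : Finset (Fin N → ℤ)} (hA : A.Nonempty)
    (h : ehr (latticeHull (A : Set (Fin N → ℤ))) 2 < (A.card + 1).choose 2) :
    ∃ a ∈ A, ∃ b ∈ A, ∃ c ∈ A, ∃ e ∈ A, s(a, b) ≠ s(c, e) ∧ a + b = c + e := by
  have hfin := finite_setOf_castVec_mem_smul_latticeHull hA 2
  let sum : Sym2 (Fin N → ℤ) → Fin N → ℤ := Sym2.lift ⟨fun x y => x + y, add_comm⟩
  have hmaps : MapsTo sum A.sym2 hfin.toFinset := by
    rintro ⟨x, y⟩ hxy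
    obtain ⟨hx, hy⟩ := Finset.mk_mem_sym2_iff.1 hxy
    exact hfin.mem_toFinset.2 (castVec_add_mem_two_smul_latticeHull hx hy)
  have hcard : hfin.toFinset.card < A.sym2.card := by
    rwa [← Set.ncard_eq_toFinset_card _ hfin, Finset.card_sym2]
  obtain ⟨⟨a, b⟩, hab, ⟨c, e⟩, hce, hne, hsum⟩ :=
    Finset.exists_ne_map_eq_of_card_lt_of_maps_to hcard hmaps
  obtain ⟨ha, hb⟩ := Finset.mk_mem_sym2_iff.1 hab
  obtain ⟨hc, he⟩ := Finset.mk_mem_sym2_iff.1 hce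
  exact ⟨a, ha, b, hb, c, hc, e, he, hne, hsum⟩

theorem exists_mem_erase_add_eq_add {G : Type*} [AddCancelCommMonoid G] [IsAddTorsionFree G]
    [DecidableEq G] {A : Finset G}
    (h : ∃ a ∈ A, ∃ b ∈ A, ∃ c ∈ A, ∃ e ∈ A, s(a, b) ≠ s(c, e) ∧ a + b = c + e) :
    ∃ b ∈ A, ∃ a ∈ A.erase b, ∃ c ∈ A.erase b, ∃ e ∈ A.erase b,
      c ≠ a ∧ e ≠ a ∧ a + b = c + e := by
  obtain ⟨a, ha, b, hb, c, hc, e, he, hne, habce⟩ := h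
  have hca : c ≠ a := fun h => hne (by subst h; rw [add_left_cancel habce])
  have hea : e ≠ a := fun h =>
    hne (by subst h; rw [add_left_cancel (habce.trans (add_comm c e)), Sym2.eq_swap])
  have hcb : c ≠ b := fun h =>
    hne (by subst h; rw [add_right_cancel (habce.trans (add_comm c e)), Sym2.eq_swap])
  have heb : e ≠ b := fun h => hne (by subst h; rw [add_right_cancel habce])
  rcases eq_or_ne a b with rfl | hab
  · have hce : c ≠ e := by
      rintro rfl
      exact hca (nsmul_right_injective two_ne_zero (by simpa only [two_nsmul] using habce.symm))
    have ha' := Finset.mem_erase.2 ⟨hea.symm, ha⟩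
    exact ⟨e, he, c, Finset.mem_erase.2 ⟨hce, hc⟩, a, ha', a, ha', hca.symm, hca.symm, habce.symm⟩
  · exact ⟨b, hb, a, Finset.mem_erase.2 ⟨hab, ha⟩, c, Finset.mem_erase.2 ⟨hcb, hc⟩, e,
      Finset.mem_erase.2 ⟨heb, he⟩, hca, hea, habce⟩

theorem even_sum_deltaVec_of_ehr_two_lt {A : Finset (Fin N → ℤ)} (hA : A.card = d + 2)
    (hdim : Module.finrank ℝ (vectorSpan ℝ (latticeHull (A : Set (Fin N → ℤ)))) = d)
    (h : ehr (latticeHull (A : Set (Fin N → ℤ))) 2 < (d + 3).choose 2) :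
    Even (∑ i ∈ Finset.range (d + 1), deltaVec (latticeHull (A : Set (Fin N → ℤ))) d i) := by
  have hne : A.Nonempty := Finset.card_pos.1 (by lia)
  obtain ⟨b, hb, a, ha, c, hc, e, he, hca, hea, habce⟩ :=
    exists_mem_erase_add_eq_add (exists_sym2_ne_add_eq_add hne (by rwa [hA]))
  exact even_sum_deltaVec_of_add_eq_add hA hdim ha hb hc he hca hea habce

theorem IsIntegralPolytope.nonempty {P : Set (Fin N → ℝ)} (hP : IsIntegralPolytope P d) :
    P.Nonempty := by
  obtain ⟨V, hV, rfl, -⟩ := hP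
  exact (hV.to_set.image _).convexHull

theorem IsIntegralPolytope.exists_eq_latticeHull {P : Set (Fin N → ℝ)}
    (hP : IsIntegralPolytope P d) :
    ∃ A : Finset (Fin N → ℤ), P = latticeHull (A : Set (Fin N → ℤ)) ∧ ehr P 1 = A.card := by
  obtain ⟨V, hV, hPV, -⟩ := hP
  have hPV' : P = latticeHull (V : Set (Fin N → ℤ)) := hPV
  have hfin : {z | castVec z ∈ P}.Finite := by
    simpa [hPV'] using finite_setOf_castVec_mem_smul_latticeHull hV 1
  refine ⟨hfin.toFinset, Set.Subset.antisymm ?_ ?_, ?_⟩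
  · rw [hfin.coe_toFinset]
    nth_rw 1 [hPV']
    exact convexHull_mono (image_mono fun z hz => hPV' ▸ castVec_mem_latticeHull hz)
  · refine convexHull_min ?_ (hPV ▸ convex_convexHull ℝ _)
    rintro _ ⟨z, hz, rfl⟩
    exact hfin.mem_toFinset.1 hz
  · rw [← Set.ncard_eq_toFinset_card _ hfin, ehr, Nat.cast_one, one_smul]
    rfl

theorem IsIntegralPolytope.even_sum_deltaVec {P : Set (Fin N → ℝ)} (hP : IsIntegralPolytope P d)
    (h1 : deltaVec P d 1 = 1) (h2 : deltaVec P d 2 = 0) :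
    Even (∑ i ∈ Finset.range (d + 1), deltaVec P d i) := by
  have hne := hP.nonempty
  obtain ⟨A, rfl, hA⟩ := hP.exists_eq_latticeHull
  obtain ⟨-, -, -, hdim⟩ := hP
  have hehr : ehr (latticeHull (A : Set (Fin N → ℤ))) 1 = d + 2 := by
    rw [deltaVec_one hne] at h1
    lia
  exact even_sum_deltaVec_of_ehr_two_lt (hA.symm.trans hehr) hdim (ehr_two_lt_choose hne hehr h2)

theorem IsIntegralPolytope.isSmallDegreeMultiset_of_count_one_eq_zero {P : Set (Fin N → ℝ)}
    (hP : IsIntegralPolytope P d) {M : Multiset ℕ} (hMd : ∀ k ∈ M, k ≤ d) (hM : M.card ≤ 3)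
    (hδ : ∀ i ≤ d, deltaVec P d i = M.count i) (hd : 1 ≤ d) (h1 : M.count 1 = 0) :
    IsSmallDegreeMultiset d M := by
  have hδ1 := hδ 1 hd
  rw [deltaVec_one hP.nonempty, h1] at hδ1
  obtain ⟨A, rfl, hA⟩ := hP.exists_eq_latticeHull
  obtain ⟨-, -, -, hdim⟩ := hP
  exact isSmallDegreeMultiset_of_card_eq (by lia) hdim hMd hM hδ

theorem IsIntegralPolytope.isSmallDegreeMultiset {P : Set (Fin N → ℝ)}
    (hP : IsIntegralPolytope P d) {M : Multiset ℕ} (hMd : ∀ k ∈ M, k ≤ d) (hM : M.card ≤ 3)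
    (hδ : ∀ i ≤ d, deltaVec P d i = M.count i) : IsSmallDegreeMultiset d M := by
  have h0 : M.count 0 = 1 := by
    exact_mod_cast (hδ 0 d.zero_le).symm.trans (deltaVec_zero hP.nonempty)
  have of_count_one := hP.isSmallDegreeMultiset_of_count_one_eq_zero hMd hM hδ
  rcases eq_singleton_or_pair_or_triple h0 hM with hM0 | ⟨k, hk, rfl⟩ | ⟨a, b, ha, hab, rfl⟩
  · exact .inl hM0
  · have hkd := hMd k (by simp)
    rcases hk.eq_or_lt with rfl | hk
    · exact .inr (.inl ⟨1, le_rfl, by lia, rfl⟩)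
    · exact of_count_one (by lia) (by simp [hk.ne])
  · have hbd := hMd b (by simp)
    rcases ha.eq_or_lt with rfl | ha
    · rcases le_or_gt b 2 with hb | hb
      · exact .inr (.inr ⟨1, b, le_rfl, hab, hb, by lia, rfl⟩)
      · have heven := hP.even_sum_deltaVec
          ((hδ 1 (by lia)).trans (by simp [(hb.trans' one_lt_two).ne]))
          ((hδ 2 (by lia)).trans (by simp [hb.ne]))
        have hsum : ∑ i ∈ Finset.range (d + 1), deltaVec P d i = 3 := by
          rw [Finset.sum_congr rfl fun i hi => hδ i (Finset.mem_range_succ_iff.1 hi),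
            ← Nat.cast_sum, Multiset.sum_count_eq_card fun i hi =>
              Finset.mem_range_succ_iff.2 (hMd i hi)]
          rfl
        rw [hsum] at heven
        exact absurd heven (by decide)
    · exact of_count_one (by lia) (by simp [ha.ne, (ha.trans_le hab).ne])

end Necessity

section Construction

/-- The fractional parts of the multiple `(j / m) • c`. -/
noncomputable def fractMultiple {ι : Type*} (m : ℕ) (c : ι → ℤ) (j : ℕ) : ι → ℝ :=
  fun t => ((j * c t % m : ℤ) : ℝ) / m

theorem fractMultiple_mem_Ico {ι : Type*} {m : ℕ} (hm : m ≠ 0) (c : ι → ℤ) (j : ℕ) (t : ι) :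
    fractMultiple m c j t ∈ Ico 0 1 := by
  have hm' : (m : ℤ) ≠ 0 := mod_cast hm
  have hmpos : (0 : ℝ) < m := by positivity
  refine ⟨div_nonneg (mod_cast Int.emod_nonneg _ hm') hmpos.le, (div_lt_one hmpos).2 ?_⟩
  exact_mod_cast Int.emod_lt_of_pos (j * c t) (by positivity)

theorem smul_castVec_sub_fractMultiple_mem_integerLattice {ι : Type*} {m : ℕ} (hm : m ≠ 0)
    (c : ι → ℤ) {j : ℕ} {k : ℤ} (hjk : j = k % m) :
    ((k : ℝ) / m) • castVec c - fractMultiple m c j ∈ integerLattice ι := by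
  have hm' : (m : ℝ) ≠ 0 := mod_cast hm
  refine mem_integerLattice.2 fun t => ?_
  obtain ⟨q, hq⟩ : (m : ℤ) ∣ k * c t - j * c t % m := by
    rw [hjk]
    exact ((Int.mod_modEq _ _).trans ((Int.mod_modEq k m).mul_right (c t))).dvd
  refine ⟨q, ?_⟩
  have hq' : (k * c t - (j * c t % m : ℤ) : ℝ) = m * q := by exact_mod_cast hq
  simp only [fractMultiple, Pi.sub_apply, Pi.smul_apply, castVec_apply, smul_eq_mul]
  field_simp
  linarith

theorem halfOpenBox_eq_image_fractMultiple {ι : Type*} {Λ : AddSubgroup (ι → ℝ)} {c : ι → ℤ}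
    {m : ℕ} (hm : m ≠ 0)
    (hΛ : ∀ x, x ∈ Λ ↔ ∃ k : ℤ, x - ((k : ℝ) / m) • castVec c ∈ integerLattice ι) :
    halfOpenBox Λ ∅ = fractMultiple m c '' (Finset.range m : Set ℕ) := by
  have hm' : (m : ℤ) ≠ 0 := mod_cast hm
  have hmem (j : ℕ) (hj : j < m) : fractMultiple m c j ∈ halfOpenBox Λ ∅ := by
    refine ⟨(hΛ _).2 ⟨j, ?_⟩, fun t => ?_⟩
    · rw [← neg_sub]
      exact neg_mem (smul_castVec_sub_fractMultiple_mem_integerLattice hm c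
        (Int.emod_eq_of_lt j.cast_nonneg (mod_cast hj)).symm)
    · rw [halfOpenUnit_of_false (notMem_empty t)]
      exact fractMultiple_mem_Ico hm c j t
  apply Set.Subset.antisymm
  · intro x hx
    obtain ⟨k, hk⟩ := (hΛ x).1 hx.1
    lift k % m to ℕ using Int.emod_nonneg k hm' with j hj
    have hjm : j < m := by exact_mod_cast hj ▸ Int.emod_lt_of_pos k (by positivity)
    refine ⟨j, by simpa using hjm, eq_of_sub_mem_integerLattice (hmem j hjm) hx ?_⟩
    rw [← neg_sub, ← sub_add_sub_cancel x]
    exact neg_mem (add_mem hk (smul_castVec_sub_fractMultiple_mem_integerLattice hm c hj))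
  · rintro _ ⟨j, hj, rfl⟩
    exact hmem j (by simpa using hj)

variable {d m : ℕ} {c : Fin (d + 1) → ℤ}

/-- The points `-(c₁, …, c_d), e₁, …, e_d`, which satisfy the relation `∑ i, c i • v i = 0` when
`c 0 = 1`. -/
def weightedSimplex (c : Fin (d + 1) → ℤ) : Fin (d + 1) → Fin d → ℤ :=
  Fin.cons (fun k => -c k.succ) fun i => Pi.single i 1

theorem weightedSum_weightedSimplex (c : Fin (d + 1) → ℤ) (x : Fin (d + 1) → ℝ) (k : Fin d) :
    weightedSum (weightedSimplex c) x k = x k.succ - x 0 * c k.succ := by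
  simp only [weightedSum_apply_apply, weightedSimplex, Fin.sum_univ_succ, Fin.cons_zero,
    Fin.cons_succ, Pi.single_apply]
  push_cast
  simp only [mul_ite, mul_one, mul_zero, Finset.sum_ite_eq, Finset.mem_univ, if_true]
  ring

theorem sum_eq_mul_sum_add_sum_weightedSum (hc0 : c 0 = 1) (x : Fin (d + 1) → ℝ) :
    ∑ i, x i = x 0 * ∑ i, (c i : ℝ) + ∑ k, weightedSum (weightedSimplex c) x k := by
  simp [weightedSum_weightedSimplex, Fin.sum_univ_succ, hc0, mul_add, Finset.mul_sum]

theorem affineIndependent_weightedSimplex (hc0 : c 0 = 1) (hc : ∑ i, c i ≠ 0) :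
    AffineIndependent ℝ fun i => castVec (weightedSimplex c i) := by
  refine affineIndependent_castVec_iff.2 fun x hsum hx => ?_
  have hx0 : x 0 = 0 := by
    rw [sum_eq_mul_sum_add_sum_weightedSum hc0, hx] at hsum
    simpa [← Int.cast_sum, hc] using hsum
  refine funext (Fin.cases hx0 fun k => ?_)
  simpa [weightedSum_weightedSimplex, hx0] using congrFun hx k

theorem mem_weightLattice_weightedSimplex (hm : m ≠ 0) (hc0 : c 0 = 1) (hc : ∑ i, c i = m)
    (x : Fin (d + 1) → ℝ) :
    x ∈ weightLattice (weightedSimplex c) ↔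
      ∃ k : ℤ, x - ((k : ℝ) / m) • castVec c ∈ integerLattice (Fin (d + 1)) := by
  have hm' : (m : ℝ) ≠ 0 := mod_cast hm
  have hcast : ∑ i, (c i : ℝ) = m := by exact_mod_cast hc
  constructor
  · intro hx
    obtain ⟨⟨y, hy⟩, n, hn⟩ := mem_weightLattice.1 hx
    rw [sum_eq_mul_sum_add_sum_weightedSum hc0, hcast, ← hy] at hn
    have hx0 : x 0 = ((n - ∑ k, y k : ℤ) : ℝ) / m := by
      rw [eq_div_iff hm']
      push_cast
      exact eq_sub_of_add_eq hn
    refine ⟨n - ∑ k, y k, ?_⟩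
    rw [← hx0]
    refine ⟨Fin.cons 0 y, funext (Fin.cases (by simp [hc0]) fun k => ?_)⟩
    simpa [weightedSum_weightedSimplex] using congrFun hy k
  · rintro ⟨k, hk⟩
    rw [← sub_add_cancel x (((k : ℝ) / m) • castVec c)]
    refine add_mem (integerLattice_le_weightLattice _ hk) (mem_weightLattice.2 ⟨⟨0, ?_⟩, k, ?_⟩)
    · ext i
      simp [weightedSum_weightedSimplex, hc0]
    · simp [← Finset.mul_sum, hcast, hm']

theorem isIntegralPolytope_latticeHull_range {N : ℕ} {w : Fin (d + 1) → Fin N → ℤ}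
    (hw : AffineIndependent ℝ fun i => castVec (w i)) :
    IsIntegralPolytope (latticeHull (range w)) d := by
  classical
  refine ⟨Finset.univ.image w, Finset.univ_nonempty.image w, ?_, ?_⟩
  · rw [Finset.coe_image, Finset.coe_univ, image_univ]
    rfl
  rw [vectorSpan_latticeHull, ← Set.range_comp' castVec w]
  exact hw.finrank_vectorSpan (by simp)

theorem exists_isIntegralPolytope_of_weights (hm : m ≠ 0) (hc0 : c 0 = 1) (hc : ∑ i, c i = m)
    (height : ℕ → ℕ) (hheight : ∀ j < m, ∑ t, j * c t % m = m * height j) :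
    ∃ P : Set (Fin d → ℝ), IsIntegralPolytope P d ∧
      ∀ i, deltaVec P d i = ((Multiset.range m).map height).count i := by
  classical
  have hm' : (m : ℝ) ≠ 0 := mod_cast hm
  have hw := affineIndependent_weightedSimplex hc0 (by rw [hc]; exact_mod_cast hm)
  refine ⟨_, isIntegralPolytope_latticeHull_range hw, fun i => ?_⟩
  have hinj : InjOn (fractMultiple m c) (Finset.range m) := by
    have hzero (j : ℕ) (hj : j < m) : fractMultiple m c j 0 = j / m := by
      rw [fractMultiple, hc0, mul_one, Int.emod_eq_of_lt j.cast_nonneg (mod_cast hj),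
        Int.cast_natCast]
    intro j hj k hk hjk
    have h0 := congrFun hjk 0
    rw [hzero j (by simpa using hj), hzero k (by simpa using hk), div_left_inj' hm'] at h0
    exact_mod_cast h0
  have hbox := halfOpenBox_eq_image_fractMultiple hm (mem_weightLattice_weightedSimplex hm hc0 hc)
  rw [← Finset.coe_image] at hbox
  rw [deltaVec_latticeHull_range hw (by simp), IsConeLattice.boxDegrees_eq_map _ hbox,
    Finset.image_val_of_injOn hinj, Multiset.map_map, Finset.range_val]
  congr 2
  refine Multiset.map_congr rfl fun j hj => coordDegree_eq_of_sum_eq ?_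
  rw [← mul_right_inj' hm', Finset.mul_sum]
  simp only [fractMultiple, mul_div_cancel₀ _ hm']
  exact_mod_cast hheight j (Multiset.mem_range.1 hj)

theorem sum_fin_blocks {M : Type*} [AddCommMonoid M] (x y : M) {p q n : ℕ} (h : p + q ≤ n) :
    ∑ t : Fin n, (if (t : ℕ) < p then x else if (t : ℕ) < p + q then y else 0) =
      p • x + q • y := by
  obtain ⟨l, rfl⟩ := Nat.exists_eq_add_of_le h
  rw [Fin.sum_univ_eq_sum_range fun t => if t < p then x else if t < p + q then y else 0,
    Finset.sum_range_add, Finset.sum_range_add,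
    Finset.sum_congr rfl fun t ht => if_pos (Finset.mem_range.1 ht)]
  simp [add_assoc, Finset.sum_ite_of_true]

theorem exists_isIntegralPolytope_of_blocks (hd : 1 ≤ d) (hm : m ≠ 0) {p q : ℕ} (hp : 1 ≤ p)
    (hpq : p + q ≤ d + 1) (hdvd : m ∣ p + 2 * q) (height : ℕ → ℕ)
    (hheight : ∀ j < m, p * (j % m) + q * (j * 2 % m) = m * height j) :
    ∃ P : Set (Fin d → ℝ), IsIntegralPolytope P d ∧
      ∀ i, deltaVec P d i = ((Multiset.range m).map height).count i := by
  obtain ⟨h, hh⟩ := hdvd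
  let r (t : Fin (d + 1)) : ℤ := if (t : ℕ) < p then 1 else if (t : ℕ) < p + q then 2 else 0
  let e : Fin (d + 1) → ℤ := Pi.single (Fin.last d) (1 - h)
  let c (t : Fin (d + 1)) : ℤ := r t + m * e t
  refine exists_isIntegralPolytope_of_weights (c := c) hm ?_ ?_ height fun j hj => ?_
  · have hlast : (0 : Fin (d + 1)) ≠ Fin.last d :=
      Fin.ne_of_val_ne (by rw [Fin.val_zero, Fin.val_last]; lia)
    simp [c, r, e, hlast, Nat.pos_iff_ne_zero.1 hp]
  · have hr : ∑ t, r t = m * h := by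
      rw [sum_fin_blocks _ _ hpq]
      rw [nsmul_eq_mul, nsmul_eq_mul]
      exact_mod_cast (by lia : p * 1 + q * 2 = m * h)
    rw [Finset.sum_add_distrib, hr, ← Finset.mul_sum, Fintype.sum_pi_single']
    ring
  · have hmod (t : Fin (d + 1)) : j * c t % m =
        if (t : ℕ) < p then ((j % m : ℕ) : ℤ)
        else if (t : ℕ) < p + q then ((j * 2 % m : ℕ) : ℤ) else 0 := by
      rw [show j * c t = j * r t + m * (j * e t) by ring, Int.add_mul_emod_self_left]
      simp only [r]
      split_ifs <;> simp
    rw [Finset.sum_congr rfl fun t _ => hmod t, sum_fin_blocks _ _ hpq, nsmul_eq_mul, nsmul_eq_mul]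
    exact_mod_cast hheight j hj

theorem IsSmallDegreeMultiset.exists_isIntegralPolytope {M : Multiset ℕ}
    (hM : IsSmallDegreeMultiset d M) :
    ∃ P : Set (Fin d → ℝ), IsIntegralPolytope P d ∧ ∀ i, deltaVec P d i = M.count i := by
  rcases hM with rfl | ⟨k, hk, hkd, rfl⟩ | ⟨a, b, ha, hab, hba, habd, rfl⟩
  · have hzero : ({0} : Multiset ℕ) = (Multiset.range 1).map fun _ => 0 := rfl
    rw [hzero]
    exact exists_isIntegralPolytope_of_weights (c := Pi.single 0 1) one_ne_zero (by simp)
      (by simp) _ (by simp)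
  · let height : ℕ → ℕ
      | 0 => 0
      | _ => k
    have hpair : ({0, k} : Multiset ℕ) = (Multiset.range 2).map height := by
      simpa [Multiset.range_succ, height] using Multiset.pair_comm 0 k
    rw [hpair]
    refine exists_isIntegralPolytope_of_blocks (p := 2 * k) (q := 0) (by lia) two_ne_zero (by lia)
      hkd (by simp) height fun j hj => ?_
    interval_cases j <;> simp [height]
  · let height : ℕ → ℕ
      | 0 => 0
      | 1 => a
      | _ => b
    have htriple : ({0, a, b} : Multiset ℕ) = (Multiset.range 3).map height := by
      simpa [Multiset.range_succ, height, Multiset.cons_swap] using Multiset.pair_comm 0 b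
    rw [htriple]
    refine exists_isIntegralPolytope_of_blocks (p := 2 * b - a) (q := 2 * a - b) (by lia)
      three_ne_zero (by lia) (by lia) (by lia) height fun j hj => ?_
    interval_cases j <;> simp [height] <;> lia

end Construction

theorem exists_multiset_count_eq {d : ℕ} {f : ℕ → ℕ} (hf : ∀ i, d < i → f i = 0) :
    ∃ M : Multiset ℕ, M.card = ∑ i ∈ Finset.range (d + 1), f i ∧ f = M.count := by
  refine ⟨∑ i ∈ Finset.range (d + 1), Multiset.replicate (f i) i, by simp, funext fun j => ?_⟩
  simp only [Multiset.count_sum', Multiset.count_replicate, Finset.sum_ite_eq', Finset.mem_range]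
  split_ifs with hj
  · rfl
  · exact hf j (by lia)

theorem stmt15_general (d : ℕ) (δv : ℕ → ℕ) (h0 : δv 0 = 1)
    (hzero : ∀ i, d < i → δv i = 0) (h1d : δv d ≤ δv 1)
    (hsum : ∑ i ∈ Finset.range (d + 1), δv i ≤ 3)
    (s : ℕ) (hs1 : δv s ≠ 0) (hs2 : ∀ i, δv i ≠ 0 → i ≤ s) :
    (∃ P : Set (Fin d → ℝ), IsIntegralPolytope P d ∧
        ∀ i ≤ d, deltaVec P d i = (δv i : ℤ)) ↔
    ((∀ i ≤ s / 2, ∑ j ∈ Finset.range (i + 1), δv j ≤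
        ∑ j ∈ Finset.range (i + 1), δv (s - j)) ∧
     (∀ i, 1 ≤ i → i ≤ (d - 1) / 2 →
        ∑ j ∈ Finset.range i, δv (d - 1 - j) ≤ ∑ j ∈ Finset.range i, δv (2 + j))) := by
  obtain ⟨M, hcard, rfl⟩ := exists_multiset_count_eq hzero
  have hM : M.card ≤ 3 := hcard ▸ hsum
  have hMd (k : ℕ) (hk : k ∈ M) : k ≤ d :=
    not_lt.1 fun hdk => Multiset.count_ne_zero.2 hk (hzero k hdk)
  refine Iff.trans ?_ (inequalities_count_iff h0 hM hMd h1d (Multiset.count_ne_zero.1 hs1)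
    fun k hk => hs2 k (Multiset.count_ne_zero.2 hk)).symm
  constructor
  · rintro ⟨P, hP, hδ⟩
    exact hP.isSmallDegreeMultiset hMd hM hδ
  · intro hsmall
    obtain ⟨P, hP, hδ⟩ := hsmall.exists_isIntegralPolytope
    exact ⟨P, hP, fun i _ => hδ i⟩

theorem stmt15 (d : ℕ) (hd : 3 ≤ d) (δv : ℕ → ℕ) (h0 : δv 0 = 1)
    (hzero : ∀ i, d < i → δv i = 0) (h1d : δv d ≤ δv 1)
    (hsum : ∑ i ∈ Finset.range (d + 1), δv i ≤ 3)
    (s : ℕ) (hs1 : δv s ≠ 0) (hs2 : ∀ i, δv i ≠ 0 → i ≤ s) :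
    (∃ P : Set (Fin d → ℝ), IsIntegralPolytope P d ∧
        ∀ i ≤ d, deltaVec P d i = (δv i : ℤ)) ↔
    ((∀ i ≤ s / 2, ∑ j ∈ Finset.range (i + 1), δv j ≤
        ∑ j ∈ Finset.range (i + 1), δv (s - j)) ∧
     (∀ i, 1 ≤ i → i ≤ (d - 1) / 2 →
        ∑ j ∈ Finset.range i, δv (d - 1 - j) ≤ ∑ j ∈ Finset.range i, δv (2 + j))) :=
  stmt15_general d δv h0 hzero h1d hsum s hs1 hs2
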